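/- arXiv:2508.06446 — 7 statements merged into one kernel-verified Lean document; each statement's English description precedes it below -/
import Mathlib

section
/- Let Λ ⊆ ℝ² be the lattice generated by v₁ = (1, 0) and v₂ = (1/2, √3/2), and let r = 2/√3. Then (Λ, B_r²) is a robust lattice covering of ℝ²: Λ + B_r² = ℝ², and every closed ball of radius r in ℝ² contains a fundamental parallelepiped of Λ. Its density equals vol(B_r²)/det(Λ) = 8π/(3√3). In particular, there exists a robust lattice covering of ℝ² with density 8π/(3√3). -/
open MeasureTheory Pointwise

noncomputable section

/-- The lattice generated by vectors `b`. -/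
def latticeSet {n : ℕ} (b : Fin n → EuclideanSpace ℝ (Fin n)) :
    Set (EuclideanSpace ℝ (Fin n)) :=
  {x | ∃ c : Fin n → ℤ, x = ∑ i, (c i : ℝ) • b i}

/-- The determinant of the lattice generated by `b`. -/
def latticeDet {n : ℕ} (b : Fin n → EuclideanSpace ℝ (Fin n)) : ℝ :=
  |(Matrix.of fun i j => b j i).det|

/-- Vertex set of the parallelepiped starting at `x` generated by `v`. -/
def vertexSet {n : ℕ} (x : EuclideanSpace ℝ (Fin n))
    (v : Fin n → EuclideanSpace ℝ (Fin n)) : Set (EuclideanSpace ℝ (Fin n)) :=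
  {y | ∃ lam : Fin n → ℝ, (∀ i, lam i = 0 ∨ lam i = 1) ∧ y = x + ∑ i, lam i • v i}

/-- `P` is a fundamental parallelepiped of the lattice `Λ` with determinant `detΛ`. -/
def IsFundParallelepiped {n : ℕ} (Λ : Set (EuclideanSpace ℝ (Fin n))) (detΛ : ℝ)
    (P : Set (EuclideanSpace ℝ (Fin n))) : Prop :=
  ∃ x v, LinearIndependent ℝ v ∧ P = convexHull ℝ (vertexSet x v) ∧
    vertexSet x v ⊆ Λ ∧ volume P = ENNReal.ofReal detΛ

/-- `(Λ(b), B_r)` is a lattice covering of `ℝⁿ`. -/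
def IsLatticeCovering {n : ℕ} (b : Fin n → EuclideanSpace ℝ (Fin n)) (r : ℝ) : Prop :=
  LinearIndependent ℝ b ∧ latticeSet b + Metric.closedBall 0 r = Set.univ

/-- `(Λ(b), B_r)` is a robust lattice covering of `ℝⁿ`. -/
def IsRobustCovering {n : ℕ} (b : Fin n → EuclideanSpace ℝ (Fin n)) (r : ℝ) : Prop :=
  IsLatticeCovering b r ∧
  ∀ c : EuclideanSpace ℝ (Fin n),
    ∃ P, IsFundParallelepiped (latticeSet b) (latticeDet b) P ∧
      P ⊆ Metric.closedBall c r

/-- The density of the lattice covering `(Λ(b), B_r)`. -/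
def coveringDensity {n : ℕ} (b : Fin n → EuclideanSpace ℝ (Fin n)) (r : ℝ) : ℝ :=
  (volume (Metric.closedBall (0 : EuclideanSpace ℝ (Fin n)) r)).toReal / latticeDet b

/-- `ν_d`, the volume of the ball of radius `√d` in `ℝ^d`. -/
def nu (d : ℕ) : ℝ :=
  (volume (Metric.closedBall (0 : EuclideanSpace ℝ (Fin d)) (Real.sqrt d))).toReal

/-!
A lattice point `x` and an equilateral basis `w` of the lattice span a triangle with vertices `x`,
`x + w 0`, `x + w 1`; the triangles obtained in this way from `w` and from `-w` tile the plane.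
Given the centre `c` of a ball, take the triangle containing `c` and its edge nearest to `c`. The
triangle and its reflection across that edge form a fundamental parallelepiped. The vertices of the
triangle are within one side length `s` of `c`, and the reflected vertex is farthest from `c` when
`c` is the centroid, where the distance is `2 * s / √3`. Reading the triangle from another of its
vertices replaces `w` by another equilateral basis of the same lattice, so the nearest edge may be
assumed to be the one opposite `x`.
-/

section Lattice

variable {n : ℕ} {b w : Fin n → EuclideanSpace ℝ (Fin n)} {x : EuclideanSpace ℝ (Fin n)} {r : ℝ}

theorem latticeSet_eq_span (b : Fin n → EuclideanSpace ℝ (Fin n)) :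
    latticeSet b = (Submodule.span ℤ (Set.range b) : Set (EuclideanSpace ℝ (Fin n))) := by
  ext x
  simp only [latticeSet, Set.mem_ofPred_eq, SetLike.mem_coe,
    Submodule.mem_span_range_iff_exists_fun, Int.cast_smul_eq_zsmul, eq_comm]

theorem mem_latticeSet_self (b : Fin n → EuclideanSpace ℝ (Fin n)) (i : Fin n) :
    b i ∈ latticeSet b := by
  rw [latticeSet_eq_span]
  exact Submodule.subset_span (Set.mem_range_self i)

theorem add_mem_latticeSet {y : EuclideanSpace ℝ (Fin n)} (hx : x ∈ latticeSet b)
    (hy : y ∈ latticeSet b) : x + y ∈ latticeSet b := by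
  rw [latticeSet_eq_span] at *
  exact add_mem hx hy

theorem neg_mem_latticeSet (hx : x ∈ latticeSet b) : -x ∈ latticeSet b := by
  rw [latticeSet_eq_span] at *
  exact neg_mem hx

theorem latticeSet_subset_latticeSet (h : ∀ i, w i ∈ latticeSet b) :
    latticeSet w ⊆ latticeSet b := by
  simp only [latticeSet_eq_span, SetLike.mem_coe, SetLike.coe_subset_coe] at *
  exact Submodule.span_le.2 (Set.range_subset_iff.2 h)

theorem vertexSet_subset_latticeSet (hx : x ∈ latticeSet b) : vertexSet x b ⊆ latticeSet b := by
  rintro _ ⟨l, hl, rfl⟩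
  refine add_mem_latticeSet hx ?_
  rw [latticeSet_eq_span]
  refine sum_mem fun i _ ↦ ?_
  rcases hl i with h | h
  · simp only [h, zero_smul, zero_mem]
  · rw [h, one_smul]
    exact Submodule.subset_span (Set.mem_range_self i)

theorem sq_latticeDet (b : Fin n → EuclideanSpace ℝ (Fin n)) :
    latticeDet b ^ 2 = (Matrix.gram ℝ b).det := by
  rw [latticeDet, sq_abs, Matrix.gram_eq_conjTranspose_mul (EuclideanSpace.basisFun (Fin n) ℝ),
    Matrix.det_mul, Matrix.det_conjTranspose, star_trivial, sq]
  rfl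

theorem latticeDet_ne_zero_iff : latticeDet b ≠ 0 ↔ LinearIndependent ℝ b := by
  rw [← Matrix.det_gram_ne_zero_iff_linearIndependent (𝕜 := ℝ), ← sq_latticeDet,
    pow_ne_zero_iff two_ne_zero]

theorem exists_latticeDet_eq_natCast_mul (h : latticeSet w ⊆ latticeSet b) :
    ∃ k : ℕ, latticeDet w = k * latticeDet b := by
  choose M hM using fun i ↦ h (mem_latticeSet_self w i)
  have hmul : (Matrix.of fun i j ↦ w j i) =
      (Matrix.of fun i j ↦ b j i) * ((Int.castRingHom ℝ).mapMatrix (Matrix.of M)).transpose := by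
    ext i j
    simp [hM j, Matrix.mul_apply, mul_comm]
  refine ⟨(Matrix.of M).det.natAbs, ?_⟩
  rw [latticeDet, hmul, Matrix.det_mul, Matrix.det_transpose, ← RingHom.map_det, abs_mul,
    mul_comm, eq_intCast, Nat.cast_natAbs, Int.cast_abs, latticeDet]

theorem latticeDet_eq_of_latticeSet_eq (h : latticeSet w = latticeSet b) :
    latticeDet w = latticeDet b := by
  obtain ⟨k, hk⟩ := exists_latticeDet_eq_natCast_mul h.subset
  obtain ⟨m, hm⟩ := exists_latticeDet_eq_natCast_mul h.symm.subset
  by_cases hb : latticeDet b = 0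
  · rw [hk, hb, mul_zero]
  · have hmk : m * k = 1 := by
      have : (m * k : ℝ) * latticeDet b = 1 * latticeDet b := by rw [mul_assoc, ← hk, ← hm, one_mul]
      exact_mod_cast mul_right_cancel₀ hb this
    rw [hk, Nat.eq_one_of_mul_eq_one_left hmk, Nat.cast_one, one_mul]

theorem latticeSet_neg (b : Fin n → EuclideanSpace ℝ (Fin n)) :
    latticeSet (-b) = latticeSet b := by
  have hsub : ∀ w : Fin n → EuclideanSpace ℝ (Fin n), latticeSet (-w) ⊆ latticeSet w := fun w ↦
    latticeSet_subset_latticeSet fun i ↦ neg_mem_latticeSet (mem_latticeSet_self w i)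
  exact (hsub b).antisymm (by simpa only [neg_neg] using hsub (-b))

theorem vertexSet_eq_singleton_add_sum (x : EuclideanSpace ℝ (Fin n))
    (w : Fin n → EuclideanSpace ℝ (Fin n)) :
    vertexSet x w = {x} + ∑ i, {0, w i} := by
  ext y
  simp only [vertexSet, Set.mem_ofPred_eq, Set.singleton_add, Set.mem_image, Set.mem_fintype_sum,
    Set.mem_insert_iff, Set.mem_singleton_iff]
  constructor
  · rintro ⟨l, hl, rfl⟩
    exact ⟨_, ⟨fun i ↦ l i • w i, fun i ↦ (hl i).imp (by simp +contextual) (by simp +contextual),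
      rfl⟩, rfl⟩
  · rintro ⟨_, ⟨g, hg, rfl⟩, rfl⟩
    have hcoeff : ∀ i, ∃ l : ℝ, (l = 0 ∨ l = 1) ∧ g i = l • w i := fun i ↦
      (hg i).elim (fun h ↦ ⟨0, by simp [h]⟩) (fun h ↦ ⟨1, by simp [h]⟩)
    choose l hl hgl using hcoeff
    exact ⟨l, hl, by simp only [hgl]⟩

theorem volume_convexHull_vertexSet (x : EuclideanSpace ℝ (Fin n))
    (w : Fin n → EuclideanSpace ℝ (Fin n)) :
    volume (convexHull ℝ (vertexSet x w)) = ENNReal.ofReal (latticeDet w) := by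
  rw [vertexSet_eq_singleton_add_sum, convexHull_add, convexHull_singleton,
    ← parallelepiped_eq_convexHull, Set.singleton_add, Set.image_add_left, measure_preimage_add,
    ← (EuclideanSpace.basisFun (Fin n) ℝ).addHaar_eq_volume, Measure.addHaar_parallelepiped]
  rfl

theorem isFundParallelepiped_convexHull_vertexSet (hb : LinearIndependent ℝ b)
    (hx : x ∈ latticeSet b) :
    IsFundParallelepiped (latticeSet b) (latticeDet b) (convexHull ℝ (vertexSet x b)) :=
  ⟨x, b, hb, rfl, vertexSet_subset_latticeSet hx, volume_convexHull_vertexSet x b⟩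

theorem exists_mem_latticeSet_eq_add_sum (hb : LinearIndependent ℝ b)
    (c : EuclideanSpace ℝ (Fin n)) :
    ∃ x ∈ latticeSet b, ∃ t : Fin n → ℝ, (∀ i, t i ∈ Set.Ico (0 : ℝ) 1) ∧
      c = x + ∑ i, t i • b i := by
  let B := basisOfLinearIndependentOfCardEqFinrank' b hb (by simp)
  refine ⟨∑ i, (⌊B.repr c i⌋ : ℝ) • b i, ⟨_, rfl⟩, fun i ↦ Int.fract (B.repr c i),
    fun i ↦ ⟨Int.fract_nonneg _, Int.fract_lt_one _⟩, ?_⟩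
  simp only [← Finset.sum_add_distrib, ← add_smul, Int.floor_add_fract]
  simpa [B] using (B.sum_repr c).symm

/-- The condition which a robust covering imposes on the ball of radius `r` around `c`: it contains
a fundamental parallelepiped of the lattice generated by `b`. -/
def ContainsFundParallelepiped (b : Fin n → EuclideanSpace ℝ (Fin n))
    (c : EuclideanSpace ℝ (Fin n)) (r : ℝ) : Prop :=
  ∃ P, IsFundParallelepiped (latticeSet b) (latticeDet b) P ∧ P ⊆ Metric.closedBall c r

theorem ContainsFundParallelepiped.of_latticeSet_eq {c : EuclideanSpace ℝ (Fin n)}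
    (hw : ContainsFundParallelepiped w c r) (h : latticeSet w = latticeSet b) :
    ContainsFundParallelepiped b c r := by
  rwa [ContainsFundParallelepiped, ← h, ← latticeDet_eq_of_latticeSet_eq h]

theorem isRobustCovering_of_forall_containsFundParallelepiped (hb : LinearIndependent ℝ b)
    (h : ∀ c, ContainsFundParallelepiped b c r) : IsRobustCovering b r := by
  refine ⟨⟨hb, Set.eq_univ_of_forall fun c ↦ ?_⟩, h⟩
  obtain ⟨P, ⟨x, w, -, rfl, hsub, -⟩, hP⟩ := h c
  have hx : x ∈ vertexSet x w := ⟨0, by simp, by simp⟩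
  have hdist : dist x c ≤ r := hP (subset_convexHull ℝ _ hx)
  refine Set.mem_add.2 ⟨x, hsub hx, c - x, ?_, add_sub_cancel x c⟩
  rwa [mem_closedBall_zero_iff, ← dist_eq_norm, dist_comm]

end Lattice

section Equilateral

variable {E : Type*} {s : ℝ} {w : Fin 2 → E}

/-- The edge vectors of the triangle `x`, `x + w 0`, `x + w 1` as seen from its vertex `x + w 0`,
in the cyclic order which makes this an operation of period three on edge vectors. It moves any
vertex of the triangle into the role of the base point `x`. -/
def rotateEdges [AddGroup E] (w : Fin 2 → E) : Fin 2 → E :=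
  ![w 1 - w 0, -w 0]

/-- The triangle `0`, `w 0`, `w 1` is equilateral with side length `s`. -/
structure IsEquilateral [SeminormedAddGroup E] (s : ℝ) (w : Fin 2 → E) : Prop where
  norm_apply_zero : ‖w 0‖ = s
  norm_apply_one : ‖w 1‖ = s
  norm_apply_sub : ‖w 1 - w 0‖ = s

theorem IsEquilateral.neg [SeminormedAddCommGroup E] (hw : IsEquilateral s w) :
    IsEquilateral s (-w) where
  norm_apply_zero := by simpa using hw.norm_apply_zero
  norm_apply_one := by simpa using hw.norm_apply_one
  norm_apply_sub := by simpa [neg_add_eq_sub, norm_sub_rev] using hw.norm_apply_sub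

theorem IsEquilateral.rotate [SeminormedAddCommGroup E] (hw : IsEquilateral s w) :
    IsEquilateral s (rotateEdges w) where
  norm_apply_zero := hw.norm_apply_sub
  norm_apply_one := by simpa [rotateEdges] using hw.norm_apply_zero
  norm_apply_sub := by
    rw [← norm_neg, ← hw.norm_apply_one]
    congr 1
    simp only [rotateEdges, Matrix.cons_val_zero, Matrix.cons_val_one]
    abel

theorem add_smul_add_smul_eq_rotateEdges [AddCommGroup E] [Module ℝ E] (x : E) (w : Fin 2 → E)
    (α β : ℝ) :
    x + (α • w 0 + β • w 1) =
      x + w 0 + (β • rotateEdges w 0 + (1 - α - β) • rotateEdges w 1) := by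
  simp only [rotateEdges, Matrix.cons_val_zero, Matrix.cons_val_one]
  module

variable [SeminormedAddCommGroup E] [InnerProductSpace ℝ E]

theorem IsEquilateral.inner_eq (hw : IsEquilateral s w) : inner ℝ (w 0) (w 1) = s ^ 2 / 2 := by
  have h := norm_sub_sq_real (w 1) (w 0)
  rw [hw.norm_apply_zero, hw.norm_apply_one, hw.norm_apply_sub, real_inner_comm] at h
  linarith

theorem IsEquilateral.norm_smul_add_smul_sq (hw : IsEquilateral s w) (α β : ℝ) :
    ‖α • w 0 + β • w 1‖ ^ 2 = (α ^ 2 + α * β + β ^ 2) * s ^ 2 := by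
  rw [norm_add_sq_real, real_inner_smul_left, real_inner_smul_right, hw.inner_eq, norm_smul,
    norm_smul, hw.norm_apply_zero, hw.norm_apply_one, mul_pow, mul_pow,
    Real.norm_eq_abs, Real.norm_eq_abs, sq_abs, sq_abs]
  ring

end Equilateral

section TriangularLattice

variable {s : ℝ} {w : Fin 2 → EuclideanSpace ℝ (Fin 2)}

theorem latticeSet_rotateEdges (w : Fin 2 → EuclideanSpace ℝ (Fin 2)) :
    latticeSet (rotateEdges w) = latticeSet w := by
  have h0 := mem_latticeSet_self w 0
  have h1 := mem_latticeSet_self w 1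
  have hr0 : w 1 - w 0 ∈ latticeSet (rotateEdges w) := mem_latticeSet_self (rotateEdges w) 0
  have hr1 : -w 0 ∈ latticeSet (rotateEdges w) := mem_latticeSet_self (rotateEdges w) 1
  have hw0 : w 0 ∈ latticeSet (rotateEdges w) := by simpa using neg_mem_latticeSet hr1
  refine (latticeSet_subset_latticeSet <| Fin.forall_fin_two.2 ⟨?_, ?_⟩).antisymm
    (latticeSet_subset_latticeSet <| Fin.forall_fin_two.2 ⟨hw0, ?_⟩)
  · simpa [rotateEdges, sub_eq_add_neg] using add_mem_latticeSet h1 (neg_mem_latticeSet h0)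
  · exact neg_mem_latticeSet h0
  · simpa using add_mem_latticeSet hr0 hw0

theorem IsEquilateral.latticeDet_eq (hw : IsEquilateral s w) :
    latticeDet w = √3 / 2 * s ^ 2 := by
  refine (sq_eq_sq₀ (abs_nonneg _) (by positivity)).1 ?_
  rw [sq_latticeDet, Matrix.det_fin_two]
  simp only [Matrix.gram_apply, real_inner_self_eq_norm_sq, real_inner_comm (w 0) (w 1),
    hw.inner_eq, hw.norm_apply_zero, hw.norm_apply_one, mul_pow, div_pow,
    Real.sq_sqrt zero_le_three]
  ring

theorem IsEquilateral.linearIndependent (hw : IsEquilateral s w) (hs : 0 < s) :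
    LinearIndependent ℝ w := by
  rw [← latticeDet_ne_zero_iff, hw.latticeDet_eq]
  positivity

-- The left-hand side is convex in `(α, β)`, and it is at most `4 / 3` at the corners `(1, 0)`,
-- `(0, 1)` and `(1 / 3, 1 / 3)` of the region cut out by the hypotheses.
theorem sq_add_mul_add_sq_le_four_thirds {α β l m : ℝ} (hα : 1 - α - β ≤ α) (hβ : 1 - α - β ≤ β)
    (h : α + β ≤ 1) (hl : l = 0 ∨ l = 1) (hm : m = 0 ∨ m = 1) :
    (l - α) ^ 2 + (l - α) * (m - β) + (m - β) ^ 2 ≤ 4 / 3 := by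
  have hα' := sub_nonneg.2 hα
  have hβ' := sub_nonneg.2 hβ
  have h' := sub_nonneg.2 h
  rcases hl with rfl | rfl <;> rcases hm with rfl | rfl <;>
    nlinarith [mul_nonneg hα' hβ', mul_nonneg hα' h', mul_nonneg hβ' h']

section Covering

variable {α β : ℝ} {x : EuclideanSpace ℝ (Fin 2)}

-- `1 - α - β` is the barycentric coordinate at `x` of the centre of the ball, so `hα` and `hβ` say
-- that the edge opposite `x` is the nearest one.
theorem IsEquilateral.vertexSet_subset_closedBall (hw : IsEquilateral s w)
    (hα : 1 - α - β ≤ α) (hβ : 1 - α - β ≤ β) (h : α + β ≤ 1) :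
    vertexSet x w ⊆ Metric.closedBall (x + (α • w 0 + β • w 1)) (2 * s / √3) := by
  rintro _ ⟨l, hl, rfl⟩
  have hs : 0 ≤ s := hw.norm_apply_zero ▸ norm_nonneg (w 0)
  have hdiff : x + ∑ i, l i • w i - (x + (α • w 0 + β • w 1)) =
      (l 0 - α) • w 0 + (l 1 - β) • w 1 := by
    rw [Fin.sum_univ_two]
    module
  have hr : (2 * s / √3) ^ 2 = 4 / 3 * s ^ 2 := by
    rw [div_pow, mul_pow, Real.sq_sqrt zero_le_three]
    ring
  rw [mem_closedBall_iff_norm, hdiff]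
  refine le_of_sq_le_sq ?_ (by positivity)
  rw [hw.norm_smul_add_smul_sq, hr]
  gcongr
  exact sq_add_mul_add_sq_le_four_thirds hα hβ h (hl 0) (hl 1)

theorem IsEquilateral.containsFundParallelepiped_of_nearest_edge (hw : IsEquilateral s w)
    (hs : 0 < s) (hx : x ∈ latticeSet w) (hα : 1 - α - β ≤ α) (hβ : 1 - α - β ≤ β)
    (h : α + β ≤ 1) :
    ContainsFundParallelepiped w (x + (α • w 0 + β • w 1)) (2 * s / √3) :=
  ⟨_, isFundParallelepiped_convexHull_vertexSet (hw.linearIndependent hs) hx,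
    convexHull_min (hw.vertexSet_subset_closedBall hα hβ h) (convex_closedBall _ _)⟩

theorem add_apply_zero_mem_latticeSet_rotateEdges (hx : x ∈ latticeSet w) :
    x + w 0 ∈ latticeSet (rotateEdges w) := by
  rw [latticeSet_rotateEdges]
  exact add_mem_latticeSet hx (mem_latticeSet_self w 0)

theorem IsEquilateral.containsFundParallelepiped_of_mem_triangle (hw : IsEquilateral s w)
    (hs : 0 < s) (hx : x ∈ latticeSet w) (hα : 0 ≤ α) (hβ : 0 ≤ β) (h : α + β ≤ 1) :
    ContainsFundParallelepiped w (x + (α • w 0 + β • w 1)) (2 * s / √3) := by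
  have hx' := add_apply_zero_mem_latticeSet_rotateEdges hx
  have hmin : (1 - α - β ≤ α ∧ 1 - α - β ≤ β) ∨ (α ≤ β ∧ α ≤ 1 - α - β) ∨
      (β ≤ 1 - α - β ∧ β ≤ α) := by grind
  obtain ⟨h₁, h₂⟩ | ⟨h₁, h₂⟩ | ⟨h₁, h₂⟩ := hmin
  · exact hw.containsFundParallelepiped_of_nearest_edge hs hx h₁ h₂ h
  · rw [add_smul_add_smul_eq_rotateEdges]
    exact (hw.rotate.containsFundParallelepiped_of_nearest_edge hs hx' (by linarith)
      (by linarith) (by linarith)).of_latticeSet_eq (latticeSet_rotateEdges w)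
  · rw [add_smul_add_smul_eq_rotateEdges, add_smul_add_smul_eq_rotateEdges]
    exact (hw.rotate.rotate.containsFundParallelepiped_of_nearest_edge hs
      (add_apply_zero_mem_latticeSet_rotateEdges hx') (by linarith) (by linarith)
      (by linarith)).of_latticeSet_eq ((latticeSet_rotateEdges _).trans (latticeSet_rotateEdges w))

theorem IsEquilateral.containsFundParallelepiped (hw : IsEquilateral s w) (hs : 0 < s)
    (c : EuclideanSpace ℝ (Fin 2)) : ContainsFundParallelepiped w c (2 * s / √3) := by
  obtain ⟨x, hx, t, ht, rfl⟩ := exists_mem_latticeSet_eq_add_sum (hw.linearIndependent hs) c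
  rw [Fin.sum_univ_two]
  rcases le_total (t 0 + t 1) 1 with h | h
  · exact hw.containsFundParallelepiped_of_mem_triangle hs hx (ht 0).1 (ht 1).1 h
  · have hopp : x + (t 0 • w 0 + t 1 • w 1) =
        x + (w 0 + w 1) + ((1 - t 0) • (-w) 0 + (1 - t 1) • (-w) 1) := by
      simp only [Pi.neg_apply]
      module
    have hxopp : x + (w 0 + w 1) ∈ latticeSet (-w) := by
      rw [latticeSet_neg]
      exact add_mem_latticeSet hx
        (add_mem_latticeSet (mem_latticeSet_self w 0) (mem_latticeSet_self w 1))
    rw [hopp]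
    exact (hw.neg.containsFundParallelepiped_of_mem_triangle hs hxopp
      (sub_nonneg.2 (ht 0).2.le) (sub_nonneg.2 (ht 1).2.le) (by linarith)).of_latticeSet_eq
        (latticeSet_neg w)

end Covering

theorem coveringDensity_fin_two (b : Fin 2 → EuclideanSpace ℝ (Fin 2)) {r : ℝ} (hr : 0 ≤ r) :
    coveringDensity b r = Real.pi * r ^ 2 / latticeDet b := by
  rw [coveringDensity, EuclideanSpace.volume_closedBall_fin_two, ENNReal.toReal_mul,
    ENNReal.toReal_pow, ENNReal.toReal_ofReal hr, ENNReal.toReal_ofReal Real.pi_nonneg, mul_comm]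

theorem IsEquilateral.coveringDensity_eq (hw : IsEquilateral s w) (hs : 0 < s) :
    coveringDensity w (2 * s / √3) = 8 * Real.pi / (3 * √3) := by
  rw [coveringDensity_fin_two w (by positivity), hw.latticeDet_eq, div_pow,
    Real.sq_sqrt zero_le_three]
  field_simp
  norm_num

end TriangularLattice

theorem isEquilateral_one_half_sqrt_three {v : Fin 2 → EuclideanSpace ℝ (Fin 2)}
    (hv0 : v 0 = (WithLp.equiv 2 (Fin 2 → ℝ)).symm ![1, 0])
    (hv1 : v 1 = (WithLp.equiv 2 (Fin 2 → ℝ)).symm ![1 / 2, √3 / 2]) :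
    IsEquilateral 1 v := by
  constructor <;> simp [hv0, hv1, EuclideanSpace.norm_eq, div_pow] <;> norm_num

theorem robust_covering_R2_general {s : ℝ} (hs : 0 < s) {v : Fin 2 → EuclideanSpace ℝ (Fin 2)}
    (hv : IsEquilateral s v) :
    IsRobustCovering v (2 * s / √3) ∧
      coveringDensity v (2 * s / √3) = 8 * Real.pi / (3 * √3) :=
  ⟨isRobustCovering_of_forall_containsFundParallelepiped (hv.linearIndependent hs)
    (hv.containsFundParallelepiped hs), hv.coveringDensity_eq hs⟩

/-- **Lemma 1.5.** The hexagonal-type lattice generated by `(1,0)` and `(1/2, √3/2)`,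
together with radius `2/√3`, is a robust lattice covering of `ℝ²` of density
`8π/(3√3)`. -/
theorem robust_covering_R2 (v : Fin 2 → EuclideanSpace ℝ (Fin 2))
    (hv0 : v 0 = (WithLp.equiv 2 (Fin 2 → ℝ)).symm ![1, 0])
    (hv1 : v 1 = (WithLp.equiv 2 (Fin 2 → ℝ)).symm ![1 / 2, Real.sqrt 3 / 2]) :
    IsRobustCovering v (2 / Real.sqrt 3) ∧
    coveringDensity v (2 / Real.sqrt 3) = 8 * Real.pi / (3 * Real.sqrt 3) := by
  simpa only [mul_one] using
    robust_covering_R2_general one_pos (isEquilateral_one_half_sqrt_three hv0 hv1)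

end
end

section
/- Let d ≥ 1 be an integer and let (Λ, B_r^d) be a robust lattice covering of ℝ^d with det(Λ) = 1 and vol(B_r^d) ≤ ν_d. Then the number of lattice points of Λ contained in the ball B_{2r}^d is at most ((4r)^d + 1)^d; in particular it is at most (4^d · d^{d/2} + 1)^d. -/
open MeasureTheory Pointwise

noncomputable section

/-!
If `v₁, …, v_d ∈ Λ` are linearly independent with `‖vᵢ‖ ≤ 2r`, then by Cramer's rule a point `y` is
determined by the `d` determinants obtained by replacing some `vᵢ` by `y`. For `y ∈ Λ` each of them
is an integer multiple of `det Λ`, and for `‖y‖ ≤ 2r` Hadamard's inequality bounds it by `(2r)^d`,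
so there are at most `2 (2r)^d / det Λ + 1` possibilities for each. A robust covering has such `vᵢ`:
the edges of a fundamental parallelepiped contained in the ball of radius `r`.
-/

section Determinant

open Module Submodule

variable {ι R M : Type*} [Fintype ι] [DecidableEq ι] [CommRing R] [AddCommGroup M] [Module R M]

lemma basisDet_mem_zmultiples_of_mem_span_int (e : Basis ι R M) {b w : ι → M}
    (hw : ∀ i, w i ∈ span ℤ (Set.range b)) :
    e.det w ∈ AddSubgroup.zmultiples (e.det b) := by
  choose C hC using fun i ↦ mem_span_range_iff_exists_fun ℤ |>.mp (hw i)
  have hmatrix : e.toMatrix w = e.toMatrix b * (Matrix.of C).transpose.map (Int.cast : ℤ → R) := by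
    ext i j
    simp [Basis.toMatrix_apply, Matrix.mul_apply, ← hC j, mul_comm]
  refine AddSubgroup.mem_zmultiples_iff.mpr ⟨(Matrix.of C).transpose.det, ?_⟩
  rw [e.det_apply w, hmatrix, Matrix.det_mul, ← Int.cast_det, e.det_apply b, zsmul_eq_mul,
    mul_comm]

lemma basisDet_update_injective (e : Basis ι R M) {v : ι → M} (hv : IsUnit (e.det v)) :
    Function.Injective fun (x : M) (i : ι) ↦ e.det (Function.update v i x) := by
  obtain ⟨hli, hspan⟩ := (Basis.is_basis_iff_det e).mpr hv
  have cramer (x : M) (i : ι) :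
      e.det (Function.update v i x) = e.det v * (Basis.mk hli hspan.ge).repr x i :=
    (LinearMap.congr_fun (e.det_smul_mk_coord_eq_det_update hli hspan.ge i) x).symm
  intro x y hxy
  refine (Basis.mk hli hspan.ge).ext_elem fun i ↦ hv.mul_left_cancel ?_
  rw [← cramer, ← cramer]
  exact congrFun hxy i

lemma isUnit_basisDet_of_linearIndependent {K V : Type*} [Field K] [AddCommGroup V] [Module K V]
    (e : Basis ι K V) {v : ι → V} (hv : LinearIndependent K v) : IsUnit (e.det v) :=
  have : FiniteDimensional K V := .of_basis e
  (Basis.is_basis_iff_det e).mp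
    ⟨hv, hv.span_eq_top_of_card_eq_finrank' (finrank_eq_card_basis e).symm⟩

end Determinant

lemma encard_zmultiples_abs_le {K : Type*} [Field K] [LinearOrder K] [IsStrictOrderedRing K]
    [FloorSemiring K] {a : K} (ha : a ≠ 0) (C : K) :
    {x ∈ AddSubgroup.zmultiples a | |x| ≤ C}.encard ≤ (2 * ⌊C / |a|⌋₊ + 1 : ℕ) := by
  set N := ⌊C / |a|⌋₊
  have hsub : {x ∈ AddSubgroup.zmultiples a | |x| ≤ C} ⊆
      (fun k : ℤ ↦ k • a) '' (Finset.Icc (-N : ℤ) N : Set ℤ) := by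
    rintro _ ⟨⟨k, rfl⟩, hk⟩
    have hkN : k.natAbs ≤ N := by
      refine Nat.le_floor ((le_div_iff₀ (abs_pos.mpr ha)).mpr ?_)
      simpa [Nat.cast_natAbs, abs_mul] using hk
    exact ⟨k, Finset.mem_coe.mpr (Finset.mem_Icc.mpr (by lia)), rfl⟩
  refine (Set.encard_le_encard hsub).trans ((Set.encard_image_le _ _).trans_eq ?_)
  rw [Set.encard_coe_eq_coe_finsetCard, Int.card_Icc]
  congr 1
  lia

section InnerProductSpace

open Module Submodule

variable {ι E : Type*} [Fintype ι] [DecidableEq ι] [NormedAddCommGroup E] [InnerProductSpace ℝ E]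

lemma abs_orthonormalBasisDet_le_prod_norm (e : OrthonormalBasis ι ℝ E) (w : ι → E) :
    |e.toBasis.det w| ≤ ∏ i, ‖w i‖ := by
  let σ := Fintype.equivFin ι
  have : Fact (finrank ℝ E = Fintype.card ι) := ⟨finrank_eq_card_basis e.toBasis⟩
  have h := (e.reindex σ).toBasis.orientation.abs_volumeForm_apply_le (w ∘ σ.symm)
  rwa [Orientation.volumeForm_robust' _ (e.reindex σ), e.reindex_toBasis, Basis.det_reindex,
    Function.comp_assoc, σ.symm_comp_self, Function.comp_id,
    Function.comp_def, σ.symm.prod_comp fun i ↦ ‖w i‖] at h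

lemma abs_orthonormalBasisDet_le_pow_card (e : OrthonormalBasis ι ℝ E) {w : ι → E} {R : ℝ}
    (hw : ∀ i, ‖w i‖ ≤ R) : |e.toBasis.det w| ≤ R ^ Fintype.card ι :=
  calc |e.toBasis.det w| ≤ ∏ i, ‖w i‖ := abs_orthonormalBasisDet_le_prod_norm e w
    _ ≤ ∏ _i : ι, R := Finset.prod_le_prod (fun i _ ↦ norm_nonneg (w i)) fun i _ ↦ hw i
    _ = R ^ Fintype.card ι := Finset.prod_const R

theorem encard_span_int_inter_closedBall_le (e : OrthonormalBasis ι ℝ E) {b v : ι → E} {R : ℝ}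
    (hv : LinearIndependent ℝ v) (hvb : ∀ i, v i ∈ span ℤ (Set.range b)) (hvR : ∀ i, ‖v i‖ ≤ R) :
    ((span ℤ (Set.range b) : Set E) ∩ Metric.closedBall 0 R).encard ≤
      ((2 * ⌊R ^ Fintype.card ι / |e.toBasis.det b|⌋₊ + 1) ^ Fintype.card ι : ℕ) := by
  have hunit := isUnit_basisDet_of_linearIndependent e.toBasis hv
  have hb : e.toBasis.det b ≠ 0 := by
    intro h
    have := basisDet_mem_zmultiples_of_mem_span_int e.toBasis hvb
    simp [h, hunit.ne_zero] at this
  let S := {x ∈ AddSubgroup.zmultiples (e.toBasis.det b) | |x| ≤ R ^ Fintype.card ι}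
  have hmaps : Set.MapsTo (fun y i ↦ e.toBasis.det (Function.update v i y))
      ((span ℤ (Set.range b) : Set E) ∩ Metric.closedBall 0 R) (Set.univ.pi fun _ ↦ S) := by
    rintro y ⟨hyb, hyR⟩ i -
    have hupdate_mem : ∀ j, Function.update v i y j ∈ span ℤ (Set.range b) :=
      (Function.forall_update_iff v fun _ z ↦ z ∈ span ℤ (Set.range b)).mpr
        ⟨hyb, fun j _ ↦ hvb j⟩
    have hupdate_norm : ∀ j, ‖Function.update v i y j‖ ≤ R :=
      (Function.forall_update_iff v fun _ z ↦ ‖z‖ ≤ R).mpr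
        ⟨mem_closedBall_zero_iff.mp hyR, fun j _ ↦ hvR j⟩
    exact ⟨basisDet_mem_zmultiples_of_mem_span_int e.toBasis hupdate_mem,
      abs_orthonormalBasisDet_le_pow_card e hupdate_norm⟩
  calc _ ≤ (Set.univ.pi fun _ : ι ↦ S).encard :=
        Set.encard_le_encard_of_injOn hmaps (basisDet_update_injective e.toBasis hunit).injOn
    _ = S.encard ^ Fintype.card ι := by
        rw [Set.encard_pi_eq_prod_encard, Finset.prod_const, Finset.card_univ]
    _ ≤ _ := by
        rw [Nat.cast_pow]
        gcongr
        exact encard_zmultiples_abs_le hb _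

end InnerProductSpace

lemma addHaar_real_closedBall_div_le_iff {E : Type*} [NormedAddCommGroup E] [NormedSpace ℝ E]
    [FiniteDimensional ℝ E] [MeasurableSpace E] [BorelSpace E] (μ : Measure E) [μ.IsAddHaarMeasure]
    {r s : ℝ} (hr : 0 ≤ r) (hs : 0 ≤ s) (a : ℝ) (x y : E) :
    μ.real (Metric.closedBall x r) / a ≤ μ.real (Metric.closedBall y s) ↔
      r ^ Module.finrank ℝ E / a ≤ s ^ Module.finrank ℝ E := by
  have hball : 0 < μ.real (Metric.ball (0 : E) 1) :=
    ENNReal.toReal_pos (Metric.measure_ball_pos μ _ one_pos).ne' measure_ball_lt_top.ne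
  rw [μ.addHaar_real_closedBall x hr, μ.addHaar_real_closedBall y hs, mul_div_right_comm,
    mul_le_mul_iff_left₀ hball]

lemma two_mul_floor_two_mul_pow_div_le {d : ℕ} (hd : d ≠ 0) {r D : ℝ} (hr : 0 ≤ r)
    (hD : 0 ≤ D) :
    2 * (⌊(2 * r) ^ d / D⌋₊ : ℝ) ≤ (4 * r) ^ d / D :=
  calc 2 * (⌊(2 * r) ^ d / D⌋₊ : ℝ) ≤ 2 * ((2 * r) ^ d / D) := by
        gcongr
        exact Nat.floor_le (by positivity)
    _ ≤ 2 ^ d * ((2 * r) ^ d / D) := by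
        gcongr
        exact le_self_pow₀ one_le_two hd
    _ = (4 * r) ^ d / D := by
        rw [← mul_div_assoc, ← mul_pow]
        ring_nf

section Euclidean

variable {d : ℕ} {b v : Fin d → EuclideanSpace ℝ (Fin d)} {r : ℝ}

lemma latticeSet_eq_span_int (b : Fin d → EuclideanSpace ℝ (Fin d)) :
    latticeSet b = (Submodule.span ℤ (Set.range b) : Set (EuclideanSpace ℝ (Fin d))) := by
  ext x
  simp [latticeSet, Submodule.mem_span_range_iff_exists_fun, Int.cast_smul_eq_zsmul, eq_comm]

lemma latticeDet_eq_abs_basisDet (b : Fin d → EuclideanSpace ℝ (Fin d)) :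
    latticeDet b = |(EuclideanSpace.basisFun (Fin d) ℝ).toBasis.det b| :=
  rfl

lemma coveringDensity_le_nu_iff (hr : 0 ≤ r) :
    coveringDensity b r ≤ nu d ↔ r ^ d / latticeDet b ≤ (d : ℝ) ^ ((d : ℝ) / 2) := by
  rw [Real.rpow_div_two_eq_sqrt _ d.cast_nonneg, Real.rpow_natCast]
  simpa only [finrank_euclideanSpace_fin, coveringDensity, nu, measureReal_def] using
    addHaar_real_closedBall_div_le_iff volume hr (Real.sqrt_nonneg d) (latticeDet b)
      (0 : EuclideanSpace ℝ (Fin d)) 0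

lemma start_mem_vertexSet (x : EuclideanSpace ℝ (Fin d)) (v : Fin d → EuclideanSpace ℝ (Fin d)) :
    x ∈ vertexSet x v :=
  ⟨0, by simp, by simp⟩

lemma add_mem_vertexSet (x : EuclideanSpace ℝ (Fin d)) (v : Fin d → EuclideanSpace ℝ (Fin d))
    (i : Fin d) : x + v i ∈ vertexSet x v :=
  ⟨Pi.single i 1, fun j ↦ by obtain rfl | h := eq_or_ne j i <;> simp [*],
    by simp [Pi.single_apply, ite_smul]⟩

lemma IsFundParallelepiped.exists_linearIndependent_norm_le {D : ℝ}
    {P : Set (EuclideanSpace ℝ (Fin d))} {c : EuclideanSpace ℝ (Fin d)}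
    (hP : IsFundParallelepiped (latticeSet b) D P) (hPc : P ⊆ Metric.closedBall c r) :
    ∃ v : Fin d → EuclideanSpace ℝ (Fin d),
      LinearIndependent ℝ v ∧ (∀ i, v i ∈ latticeSet b) ∧ ∀ i, ‖v i‖ ≤ 2 * r := by
  obtain ⟨x, v, hv, rfl, hvert, -⟩ := hP
  have hball := (subset_convexHull ℝ (vertexSet x v)).trans hPc
  refine ⟨v, hv, fun i ↦ ?_, fun i ↦ ?_⟩
  · rw [latticeSet_eq_span_int] at hvert ⊢
    simpa using sub_mem (hvert (add_mem_vertexSet x v i)) (hvert (start_mem_vertexSet x v))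
  · calc ‖v i‖ = dist (x + v i) x := by simp
      _ ≤ dist (x + v i) c + dist x c := dist_triangle_right _ _ c
      _ ≤ r + r :=
        add_le_add (hball (add_mem_vertexSet x v i)) (hball (start_mem_vertexSet x v))
      _ = 2 * r := (two_mul r).symm

theorem encard_latticeSet_inter_closedBall_le {R : ℝ} (hv : LinearIndependent ℝ v)
    (hvb : ∀ i, v i ∈ latticeSet b) (hvR : ∀ i, ‖v i‖ ≤ R) :
    (latticeSet b ∩ Metric.closedBall 0 R).encard ≤
      ((2 * ⌊R ^ d / latticeDet b⌋₊ + 1) ^ d : ℕ) := by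
  rw [latticeSet_eq_span_int] at hvb ⊢
  simpa only [Fintype.card_fin, latticeDet_eq_abs_basisDet] using
    encard_span_int_inter_closedBall_le (EuclideanSpace.basisFun (Fin d) ℝ) hv hvb hvR

theorem lattice_points_in_double_ball_general (hv : LinearIndependent ℝ v)
    (hvb : ∀ i, v i ∈ latticeSet b) (hvr : ∀ i, ‖v i‖ ≤ 2 * r) :
    (latticeSet b ∩ Metric.closedBall 0 (2 * r)).Finite ∧
    ((latticeSet b ∩ Metric.closedBall 0 (2 * r)).ncard : ℝ) ≤
      ((4 * r) ^ d / latticeDet b + 1) ^ d ∧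
    (coveringDensity b r ≤ nu d →
      ((latticeSet b ∩ Metric.closedBall 0 (2 * r)).ncard : ℝ) ≤
        (4 ^ d * (d : ℝ) ^ ((d : ℝ) / 2) + 1) ^ d) := by
  obtain ⟨hfin, hcard⟩ := Set.encard_le_coe_iff_finite_ncard_le.mp
    (encard_latticeSet_inter_closedBall_le hv hvb hvr)
  obtain rfl | hd := eq_or_ne d 0
  · exact ⟨hfin, by simpa using hcard, fun _ ↦ by simpa using hcard⟩
  have hr : 0 ≤ r := by
    have := (norm_nonneg _).trans (hvr ⟨0, Nat.pos_of_ne_zero hd⟩)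
    linarith
  have hD : 0 ≤ latticeDet b := abs_nonneg _
  have hbound : ((latticeSet b ∩ Metric.closedBall 0 (2 * r)).ncard : ℝ) ≤
      ((4 * r) ^ d / latticeDet b + 1) ^ d := by
    refine (Nat.cast_le.mpr hcard).trans ?_
    push_cast
    gcongr
    exact two_mul_floor_two_mul_pow_div_le hd hr hD
  refine ⟨hfin, hbound, fun hdensity ↦ hbound.trans ?_⟩
  rw [mul_pow, mul_div_assoc]
  gcongr
  exact (coveringDensity_le_nu_iff hr).mp hdensity

end Euclidean

/-- **Claim 3.2.** For a robust lattice covering `(Λ, B_r)` of `ℝ^d` with `det(Λ) = 1` and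
`vol(B_r) ≤ ν_d`, the number of lattice points of `Λ` in `B_{2r}` is at most
`((4r)^d + 1)^d`, and in particular at most `(4^d d^{d/2} + 1)^d`. -/
theorem lattice_points_in_double_ball (d : ℕ) (hd : 1 ≤ d)
    (b : Fin d → EuclideanSpace ℝ (Fin d)) (r : ℝ)
    (hrob : IsRobustCovering b r) (hdet : latticeDet b = 1)
    (hvol : (volume (Metric.closedBall (0 : EuclideanSpace ℝ (Fin d)) r)).toReal ≤ nu d) :
    (latticeSet b ∩ Metric.closedBall 0 (2 * r)).Finite ∧
    ((latticeSet b ∩ Metric.closedBall 0 (2 * r)).ncard : ℝ) ≤ ((4 * r) ^ d + 1) ^ d ∧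
    ((latticeSet b ∩ Metric.closedBall 0 (2 * r)).ncard : ℝ) ≤
      (4 ^ d * (d : ℝ) ^ ((d : ℝ) / 2) + 1) ^ d := by
  obtain ⟨P, hP, hPr⟩ := hrob.2 0
  obtain ⟨v, hv, hvb, hvr⟩ := hP.exists_linearIndependent_norm_le hPr
  simpa only [coveringDensity, hdet, div_one, hvol, true_imp_iff] using
    lattice_points_in_double_ball_general hv hvb hvr

end
end

section
/- Let K ⊆ ℝⁿ be a convex body and let δ := ρ̄(ℤⁿ + K) = vol([0,1)ⁿ ∖ (ℤⁿ + K)). Then ∫_{[0,1)ⁿ} ρ̄(ℤⁿ + (K ∪ (K + y))) dy = δ², where y ranges over [0,1)ⁿ with Lebesgue measure; that is, if y is chosen uniformly at random from [0,1)ⁿ, the expected uncovered density of ℤⁿ + (K ∪ (K + y)) equals δ². -/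
open MeasureTheory Pointwise

noncomputable section

/-- The integer lattice `ℤⁿ ⊆ ℝⁿ`. -/
def intLat (n : ℕ) : Set (EuclideanSpace ℝ (Fin n)) :=
  {x | ∀ i, ∃ m : ℤ, x i = (m : ℝ)}

/-- The fundamental cube `[0,1)ⁿ ⊆ ℝⁿ`. -/
def unitCube (n : ℕ) : Set (EuclideanSpace ℝ (Fin n)) :=
  {x | ∀ i, x i ∈ Set.Ico (0 : ℝ) 1}

/-- The uncovered density `ρ̄(ℤⁿ + A) = vol([0,1)ⁿ \ (ℤⁿ + A))`. -/
def rhoBar {n : ℕ} (A : Set (EuclideanSpace ℝ (Fin n))) : ℝ :=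
  (volume (unitCube n \ (intLat n + A))).toReal

/-!
A point `x` of the cube is missed by `ℤⁿ + (K ∪ (K + y))` exactly when both `x` and `x - y` lie in
the `ℤⁿ`-periodic set `U := ℝⁿ \ (ℤⁿ + K)`. By Tonelli one may fix `x` and integrate over `y`
first; since `U` is periodic and `x - [0,1)ⁿ` is again a fundamental domain of `ℤⁿ`, the inner
integral is `δ` whenever `x ∈ U`, and the set of such `x` in the cube has measure `δ`.
-/

open Set

section PeriodicTonelli

variable {G : Type*} [AddCommGroup G] [MeasurableSpace G] [MeasurableNeg G]
  {μ : Measure G} [μ.IsAddLeftInvariant] {Λ : AddSubgroup G} {F : Set G}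

theorem isAddFundamentalDomain_preimage_sub_left [MeasurableAdd G] [μ.IsNegInvariant]
    (hF : IsAddFundamentalDomain Λ F μ) (x : G) :
    IsAddFundamentalDomain Λ ((x - ·) ⁻¹' F) μ :=
  hF.preimage_of_equiv (Measure.measurePreserving_sub_left μ x).quasiMeasurePreserving
    neg_involutive.bijective fun g z ↦ by
      simp only [AddSubgroup.vadd_def, NegMemClass.coe_neg, vadd_eq_add]
      abel

theorem setLIntegral_sub_left_of_periodic [MeasurableAdd G] [μ.IsNegInvariant] [Countable Λ]
    (hF : IsAddFundamentalDomain Λ F μ) {g : G → ENNReal} (hg : ∀ (l : Λ) (z : G), g (l +ᵥ z) = g z)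
    (x : G) : ∫⁻ y in F, g (x - y) ∂μ = ∫⁻ z in F, g z ∂μ := by
  have preimage_sub_left_preimage : (x - ·) ⁻¹' ((x - ·) ⁻¹' F) = F := by
    simp only [preimage_preimage, sub_sub_cancel, preimage_id']
  calc ∫⁻ y in F, g (x - y) ∂μ
      = ∫⁻ z in (x - ·) ⁻¹' F, g z ∂μ := by
        conv_lhs => rw [← preimage_sub_left_preimage]
        exact (Measure.measurePreserving_sub_left μ x).setLIntegral_comp_preimage_emb
          (MeasurableEquiv.subLeft x).measurableEmbedding g _
    _ = ∫⁻ z in F, g z ∂μ :=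
        (isAddFundamentalDomain_preimage_sub_left hF x).setLIntegral_eq hF g hg

variable [MeasurableAdd₂ G] [SFinite μ]

theorem aemeasurable_mul_comp_sub {f g : G → ENNReal} (hf : AEMeasurable f μ)
    (hg : AEMeasurable g μ) {μ' ν : Measure G} [SFinite μ'] [SFinite ν] (hμ' : μ' ≪ μ) :
    AEMeasurable (fun p : G × G ↦ f p.1 * g (p.1 - p.2)) (μ'.prod ν) :=
  have aemeasurable_prod : AEMeasurable (fun p : G × G ↦ f p.1 * g (p.1 - p.2)) (μ.prod ν) :=
    hf.comp_fst.mul (hg.comp_quasiMeasurePreserving (quasiMeasurePreserving_sub μ ν))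
  aemeasurable_prod.mono_ac (hμ'.prod .rfl)

theorem setLIntegral_setLIntegral_mul_comp_sub [μ.IsNegInvariant] [Countable Λ]
    (hF : IsAddFundamentalDomain Λ F μ) {f g : G → ENNReal} (hf : AEMeasurable f μ)
    (hg : AEMeasurable g μ) (hper : ∀ (l : Λ) (z : G), g (l +ᵥ z) = g z) :
    ∫⁻ y in F, ∫⁻ x in F, f x * g (x - y) ∂μ ∂μ = (∫⁻ x in F, f x ∂μ) * ∫⁻ x in F, g x ∂μ := by
  have aemeasurable_sub_left (x : G) : AEMeasurable (fun y ↦ g (x - y)) μ :=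
    hg.comp_quasiMeasurePreserving (Measure.measurePreserving_sub_left μ x).quasiMeasurePreserving
  calc ∫⁻ y in F, ∫⁻ x in F, f x * g (x - y) ∂μ ∂μ
      = ∫⁻ x in F, ∫⁻ y in F, f x * g (x - y) ∂μ ∂μ :=
        (lintegral_lintegral_swap
          (aemeasurable_mul_comp_sub hf hg Measure.absolutelyContinuous_restrict)).symm
    _ = ∫⁻ x in F, f x * ∫⁻ z in F, g z ∂μ ∂μ := by
        simp only [lintegral_const_mul'' _ (aemeasurable_sub_left _).restrict,
          setLIntegral_sub_left_of_periodic hF hper]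
    _ = (∫⁻ x in F, f x ∂μ) * ∫⁻ x in F, g x ∂μ := lintegral_mul_const'' _ hf.restrict

end PeriodicTonelli

section Uncovered

variable {G : Type*} [AddCommGroup G]

/-- The indicator function of the set of points not covered by `Λ + A`, with values in `[0, ∞]` so
that Tonelli's theorem applies to it. -/
def uncoveredIndicator (Λ : AddSubgroup G) (A : Set G) : G → ENNReal :=
  ((Λ : Set G) + A)ᶜ.indicator 1

theorem uncoveredIndicator_le_one {Λ : AddSubgroup G} (A : Set G) (x : G) :
    uncoveredIndicator Λ A x ≤ 1 :=
  indicator_apply_le fun _ ↦ le_rfl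

theorem uncoveredIndicator_vadd {Λ : AddSubgroup G} (A : Set G) (l : Λ) (x : G) :
    uncoveredIndicator Λ A (l +ᵥ x) = uncoveredIndicator Λ A x := by
  have vadd_cover : (l : G) +ᵥ ((Λ : Set G) + A) = (Λ : Set G) + A := by
    rw [← vadd_add_assoc, vadd_coe_set l.2]
  have vadd_mem_cover : l +ᵥ x ∈ (Λ : Set G) + A ↔ x ∈ (Λ : Set G) + A := by
    conv_lhs => rw [← vadd_cover, AddSubgroup.vadd_def, vadd_mem_vadd_set_iff]
  exact indicator_eq_indicator (not_congr vadd_mem_cover) rfl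

theorem uncoveredIndicator_union_add_singleton (Λ : AddSubgroup G) (A B : Set G) (x y : G) :
    uncoveredIndicator Λ (A ∪ (B + {y})) x =
      uncoveredIndicator Λ A x * uncoveredIndicator Λ B (x - y) := by
  have add_singleton_eq_preimage : (Λ : Set G) + B + {y} = (· - y) ⁻¹' ((Λ : Set G) + B) := by
    simp only [add_singleton, image_add_right, sub_eq_add_neg]
  rw [uncoveredIndicator, add_union, ← add_assoc, add_singleton_eq_preimage, compl_union,
    inter_indicator_one]
  rfl

variable [MeasurableSpace G] [MeasurableAdd G] {μ : Measure G} [μ.IsAddLeftInvariant]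
  {Λ : AddSubgroup G} [Countable Λ]

theorem nullMeasurableSet_add_of_countable {S A : Set G} (hS : S.Countable)
    (hA : NullMeasurableSet A μ) : NullMeasurableSet (S + A) μ := by
  rw [← vadd_eq_add, ← iUnion_vadd_set]
  exact .biUnion hS fun s _ ↦ hA.vadd s

theorem aemeasurable_uncoveredIndicator {A : Set G} (hA : NullMeasurableSet A μ) :
    AEMeasurable (uncoveredIndicator Λ A) μ :=
  aemeasurable_const.indicator₀ (nullMeasurableSet_add_of_countable (to_countable _) hA).compl

theorem setLIntegral_uncoveredIndicator {A F : Set G} (hA : NullMeasurableSet A μ) :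
    ∫⁻ x in F, uncoveredIndicator Λ A x ∂μ = μ (F \ (Λ + A)) := by
  have hcompl : NullMeasurableSet ((Λ : Set G) + A)ᶜ (μ.restrict F) :=
    (nullMeasurableSet_add_of_countable (to_countable _) hA).compl.mono Measure.restrict_le_self
  rw [uncoveredIndicator, lintegral_indicator_one₀ hcompl, Measure.restrict_apply₀ hcompl,
    inter_comm, sdiff_eq]

end Uncovered

section IntegerLattice

variable {n : ℕ}

/-- The lattice `intLat n` as an additive subgroup, encoded as the `ℤ`-span of the standard basis
so that `unitCube n` is the fundamental domain attached to that basis by `ZSpan`. -/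
def intLatSubgroup (n : ℕ) : AddSubgroup (EuclideanSpace ℝ (Fin n)) :=
  (Submodule.span ℤ (range (EuclideanSpace.basisFun (Fin n) ℝ).toBasis)).toAddSubgroup

instance countable_intLatSubgroup : Countable (intLatSubgroup n) :=
  inferInstanceAs (Countable (Submodule.span ℤ (range (EuclideanSpace.basisFun (Fin n) ℝ).toBasis)))

theorem coe_intLatSubgroup : (intLatSubgroup n : Set (EuclideanSpace ℝ (Fin n))) = intLat n := by
  ext x
  simp only [intLatSubgroup, Submodule.coe_toAddSubgroup, SetLike.mem_coe,
    Module.Basis.mem_span_iff_repr_mem]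
  simp [intLat, eq_comm]

theorem fundamentalDomain_basisFun :
    ZSpan.fundamentalDomain (EuclideanSpace.basisFun (Fin n) ℝ).toBasis = unitCube n := by
  ext x
  simp [ZSpan.mem_fundamentalDomain, unitCube]

theorem isAddFundamentalDomain_unitCube :
    IsAddFundamentalDomain (intLatSubgroup n) (unitCube n) volume :=
  fundamentalDomain_basisFun (n := n) ▸ ZSpan.isAddFundamentalDomain' _ volume

theorem volume_unitCube_lt_top : volume (unitCube n) < ⊤ :=
  fundamentalDomain_basisFun (n := n) ▸ (ZSpan.fundamentalDomain_isBounded _).measure_lt_top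

section RhoBar

variable {A B : Set (EuclideanSpace ℝ (Fin n))}

theorem rhoBar_eq_toReal_setLIntegral (hA : NullMeasurableSet A) :
    rhoBar A = (∫⁻ x in unitCube n, uncoveredIndicator (intLatSubgroup n) A x).toReal := by
  rw [setLIntegral_uncoveredIndicator hA, coe_intLatSubgroup, rhoBar]

theorem rhoBar_union_add_singleton (hA : NullMeasurableSet A) (hB : NullMeasurableSet B)
    (y : EuclideanSpace ℝ (Fin n)) :
    rhoBar (A ∪ (B + {y})) = (∫⁻ x in unitCube n, uncoveredIndicator (intLatSubgroup n) A x *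
      uncoveredIndicator (intLatSubgroup n) B (x - y)).toReal := by
  have nullMeasurableSet_translate : NullMeasurableSet (B + {y}) := by
    rw [add_comm, singleton_add]
    exact hB.vadd y
  simp only [rhoBar_eq_toReal_setLIntegral (hA.union nullMeasurableSet_translate),
    uncoveredIndicator_union_add_singleton]

end RhoBar

end IntegerLattice

theorem random_translation_expectation_general {n : ℕ} {A B : Set (EuclideanSpace ℝ (Fin n))}
    (hA : NullMeasurableSet A) (hB : NullMeasurableSet B) :
    ∫ y in unitCube n, rhoBar (A ∪ (B + {y})) = rhoBar A * rhoBar B := by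
  let u := uncoveredIndicator (intLatSubgroup n)
  have huA : AEMeasurable (u A) := aemeasurable_uncoveredIndicator hA
  have huB : AEMeasurable (u B) := aemeasurable_uncoveredIndicator hB
  have lintegral_lt_top (y : EuclideanSpace ℝ (Fin n)) :
      ∫⁻ x in unitCube n, u A x * u B (x - y) < ⊤ := by
    refine setLIntegral_lt_top_of_le_nnreal volume_unitCube_lt_top.ne ⟨1, fun x _ ↦ ?_⟩
    exact mul_le_one' (uncoveredIndicator_le_one A x) (uncoveredIndicator_le_one B (x - y))
  calc ∫ y in unitCube n, rhoBar (A ∪ (B + {y}))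
      = ∫ y in unitCube n, (∫⁻ x in unitCube n, u A x * u B (x - y)).toReal := by
        simp only [rhoBar_union_add_singleton hA hB, u]
    _ = (∫⁻ y in unitCube n, ∫⁻ x in unitCube n, u A x * u B (x - y)).toReal :=
        integral_toReal (aemeasurable_mul_comp_sub huA huB
          Measure.absolutelyContinuous_restrict).lintegral_prod_left' (.of_forall lintegral_lt_top)
    _ = ((∫⁻ x in unitCube n, u A x) * ∫⁻ x in unitCube n, u B x).toReal := by
        rw [setLIntegral_setLIntegral_mul_comp_sub isAddFundamentalDomain_unitCube huA huB
          (uncoveredIndicator_vadd B)]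
    _ = rhoBar A * rhoBar B := by
        rw [ENNReal.toReal_mul, rhoBar_eq_toReal_setLIntegral hA, rhoBar_eq_toReal_setLIntegral hB]

/-- **Lemma 3.3.** For a convex body `K ⊆ ℝⁿ` with `δ = ρ̄(ℤⁿ + K)`, the average over a
uniformly random translate `y ∈ [0,1)ⁿ` of the uncovered density of `ℤⁿ + (K ∪ (K + y))`
equals `δ²`. -/
theorem random_translation_expectation (n : ℕ)
    (K : Set (EuclideanSpace ℝ (Fin n)))
    (hKcpt : IsCompact K) (hKconv : Convex ℝ K) (hKint : (interior K).Nonempty)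
    (δ : ℝ) (hδ : δ = rhoBar K) :
    ∫ y in unitCube n, rhoBar (K ∪ (K + {y})) = δ ^ 2 := by
  rw [random_translation_expectation_general hKcpt.measurableSet.nullMeasurableSet
    hKcpt.measurableSet.nullMeasurableSet, ← hδ, sq]

end
end

section
/- Let n ≥ 1 be an integer and r > 0. Every parallelepiped contained in the closed ball B_rⁿ has volume at most (2r/√n)ⁿ; that is, if x, b₁, …, bₙ ∈ ℝⁿ with b₁,…,bₙ linearly independent and the convex hull of {x + Σᵢ λᵢbᵢ : λᵢ ∈ {0,1}} is contained in B_rⁿ, then |det[b₁,…,bₙ]| ≤ (2r/√n)ⁿ. -/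
open MeasureTheory Pointwise

noncomputable section

/-!
Averaging `‖y‖²` over the `2ⁿ` vertices `y` of the parallelepiped gives the squared distance of its
centre from the centre of the ball plus `¼ ∑ ‖bᵢ‖²`, so containment in a ball of radius `r` forces
`∑ ‖bᵢ‖² ≤ (2r)²`. Hadamard's inequality `|det b| ≤ ∏ ‖bᵢ‖` and the inequality between the geometric
and quadratic means of the `‖bᵢ‖` turn this into the volume bound.
-/

section Averaging

variable {E ι : Type*} [NormedAddCommGroup E] [InnerProductSpace ℝ E]

theorem norm_sq_add_norm_add_sq (y v : E) :
    ‖y‖ ^ 2 + ‖y + v‖ ^ 2 = 2 * (‖y + (1 / 2 : ℝ) • v‖ ^ 2 + ‖v‖ ^ 2 / 4) := by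
  have parallelogram := parallelogram_law_with_norm ℝ (y + (1 / 2 : ℝ) • v) ((1 / 2 : ℝ) • v)
  have norm_half_sq : ‖(1 / 2 : ℝ) • v‖ ^ 2 = ‖v‖ ^ 2 / 4 := by
    rw [norm_smul, Real.norm_of_nonneg one_half_pos.le]
    ring
  rwa [add_sub_cancel_right, add_assoc, ← add_smul, add_halves, one_smul, norm_half_sq,
    add_comm (‖y + v‖ ^ 2)] at parallelogram

theorem sum_powerset_norm_add_sum_sq (x : E) (v : ι → E) (s : Finset ι) :
    ∑ t ∈ s.powerset, ‖x + ∑ i ∈ t, v i‖ ^ 2 =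
      2 ^ s.card * (‖x + (1 / 2 : ℝ) • ∑ i ∈ s, v i‖ ^ 2 + (∑ i ∈ s, ‖v i‖ ^ 2) / 4) := by
  classical
  induction s using Finset.induction_on generalizing x with
  | empty => simp
  | insert a s ha ih =>
    have sum_insert_vertex : ∀ t ∈ s.powerset,
        ‖x + ∑ i ∈ insert a t, v i‖ ^ 2 = ‖x + v a + ∑ i ∈ t, v i‖ ^ 2 := fun t ht ↦ by
      rw [Finset.sum_insert (Finset.notMem_of_mem_powerset_of_notMem ht ha), add_assoc]
    have mean_of_centres := norm_sq_add_norm_add_sq (x + (1 / 2 : ℝ) • ∑ i ∈ s, v i) (v a)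
    rw [Finset.sum_powerset_insert ha, Finset.sum_congr rfl sum_insert_vertex, ih, ih,
      Finset.card_insert_of_notMem ha, Finset.sum_insert ha, Finset.sum_insert ha, smul_add,
      add_right_comm x, add_comm ((1 / 2 : ℝ) • v a), ← add_assoc x]
    linear_combination 2 ^ s.card * mean_of_centres

theorem sum_norm_sq_le_of_forall_mem_closedBall {x c : E} {v : ι → E} {s : Finset ι} {r : ℝ}
    (h : ∀ t ⊆ s, x + ∑ i ∈ t, v i ∈ Metric.closedBall c r) :
    ∑ i ∈ s, ‖v i‖ ^ 2 ≤ (2 * r) ^ 2 := by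
  have vertex_le : ∀ t ∈ s.powerset, ‖x - c + ∑ i ∈ t, v i‖ ^ 2 ≤ r ^ 2 := fun t ht ↦ by
    have := mem_closedBall_iff_norm.1 (h t (Finset.mem_powerset.1 ht))
    rw [sub_add_eq_add_sub]
    gcongr
  have average_le :
      ‖x - c + (1 / 2 : ℝ) • ∑ i ∈ s, v i‖ ^ 2 + (∑ i ∈ s, ‖v i‖ ^ 2) / 4 ≤ r ^ 2 := by
    have := Finset.sum_le_card_nsmul _ _ _ vertex_le
    rw [sum_powerset_norm_add_sum_sq, Finset.card_powerset, nsmul_eq_mul] at this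
    exact le_of_mul_le_mul_left (by exact_mod_cast this) (by positivity : (0 : ℝ) < 2 ^ s.card)
  linarith [sq_nonneg ‖x - c + (1 / 2 : ℝ) • ∑ i ∈ s, v i‖]

end Averaging

section Means

variable {ι : Type*} (s : Finset ι) {z : ι → ℝ}

theorem prod_le_sum_div_card_pow (hz : ∀ i ∈ s, 0 ≤ z i) :
    ∏ i ∈ s, z i ≤ ((∑ i ∈ s, z i) / s.card) ^ s.card := by
  rcases s.eq_empty_or_nonempty with rfl | hs
  · simp
  have geom_le_arith : (∏ i ∈ s, z i) ^ (s.card : ℝ)⁻¹ ≤ (∑ i ∈ s, z i) / s.card := by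
    simpa using Real.geom_mean_le_arith_mean s (fun _ ↦ 1) z (by simp) (by simpa using hs) hz
  have prod_nonneg : 0 ≤ ∏ i ∈ s, z i := Finset.prod_nonneg hz
  calc
    ∏ i ∈ s, z i = ((∏ i ∈ s, z i) ^ (s.card : ℝ)⁻¹) ^ s.card :=
      (Real.rpow_inv_natCast_pow prod_nonneg hs.card_ne_zero).symm
    _ ≤ ((∑ i ∈ s, z i) / s.card) ^ s.card := by gcongr

theorem prod_le_sqrt_sum_sq_div_card_pow :
    ∏ i ∈ s, z i ≤ √((∑ i ∈ s, z i ^ 2) / s.card) ^ s.card := by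
  refine le_of_sq_le_sq ?_ (by positivity)
  calc
    (∏ i ∈ s, z i) ^ 2 = ∏ i ∈ s, z i ^ 2 := (Finset.prod_pow s 2 z).symm
    _ ≤ ((∑ i ∈ s, z i ^ 2) / s.card) ^ s.card :=
      prod_le_sum_div_card_pow s fun i _ ↦ sq_nonneg (z i)
    _ = (√((∑ i ∈ s, z i ^ 2) / s.card) ^ s.card) ^ 2 := by
      rw [pow_right_comm, Real.sq_sqrt (by positivity)]

end Means

section Determinant

variable {ι E : Type*} [Fintype ι] [DecidableEq ι] [NormedAddCommGroup E] [InnerProductSpace ℝ E]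

theorem abs_orthonormalBasis_det_le_prod_norm (e : OrthonormalBasis ι ℝ E) (v : ι → E) :
    |e.toBasis.det v| ≤ ∏ i, ‖v i‖ := by
  let equivFin := Fintype.equivFin ι
  let e' := e.reindex equivFin
  have : Fact (Module.finrank ℝ E = Fintype.card ι) :=
    ⟨Module.finrank_eq_card_basis e.toBasis⟩
  calc
    |e.toBasis.det v| = |e'.toBasis.det (v ∘ equivFin.symm)| := by
      rw [OrthonormalBasis.reindex_toBasis, Module.Basis.det_reindex]
      simp [Function.comp_assoc]
    _ = |e'.toBasis.orientation.volumeForm (v ∘ equivFin.symm)| :=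
      (e'.toBasis.orientation.volumeForm_robust' e' _).symm
    _ ≤ ∏ k, ‖v (equivFin.symm k)‖ := Orientation.abs_volumeForm_apply_le _ _
    _ = ∏ i, ‖v i‖ := equivFin.symm.prod_comp fun i ↦ ‖v i‖

theorem parallelepiped_in_ball_volume_general (e : OrthonormalBasis ι ℝ E) {x c : E} {v : ι → E}
    {r : ℝ} (h : ∀ t : Finset ι, x + ∑ i ∈ t, v i ∈ Metric.closedBall c r) :
    |e.toBasis.det v| ≤ (2 * r / √(Fintype.card ι)) ^ Fintype.card ι := by
  have radius_nonneg : 0 ≤ r := dist_nonneg.trans (h ∅)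
  calc
    |e.toBasis.det v| ≤ ∏ i, ‖v i‖ := abs_orthonormalBasis_det_le_prod_norm e v
    _ ≤ √((∑ i, ‖v i‖ ^ 2) / Fintype.card ι) ^ Fintype.card ι :=
      prod_le_sqrt_sum_sq_div_card_pow Finset.univ
    _ ≤ √((2 * r) ^ 2 / Fintype.card ι) ^ Fintype.card ι := by
      gcongr
      exact sum_norm_sq_le_of_forall_mem_closedBall fun t _ ↦ h t
    _ = (2 * r / √(Fintype.card ι)) ^ Fintype.card ι := by
      rw [Real.sqrt_div (sq_nonneg _), Real.sqrt_sq (by positivity)]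

theorem basisFun_det_apply (v : ι → EuclideanSpace ℝ ι) :
    (EuclideanSpace.basisFun ι ℝ).toBasis.det v = (Matrix.of fun i j ↦ v j i).det := by
  rw [Module.Basis.det_apply]
  congr 1

end Determinant

theorem add_sum_mem_vertexSet {n : ℕ} (x : EuclideanSpace ℝ (Fin n))
    (v : Fin n → EuclideanSpace ℝ (Fin n)) (t : Finset (Fin n)) :
    x + ∑ i ∈ t, v i ∈ vertexSet x v :=
  ⟨fun i ↦ if i ∈ t then 1 else 0, fun i ↦ (ite_eq_or_eq (i ∈ t) 1 0).symm, by simp⟩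

/-- Every parallelepiped contained in the closed ball `B_rⁿ` has volume
`|det[b₁,…,bₙ]| ≤ (2r/√n)ⁿ`. -/
theorem parallelepiped_in_ball_volume (n : ℕ) (hn : 1 ≤ n) (r : ℝ) (hr : 0 < r)
    (x : EuclideanSpace ℝ (Fin n)) (b : Fin n → EuclideanSpace ℝ (Fin n))
    (hb : LinearIndependent ℝ b)
    (hsub : convexHull ℝ (vertexSet x b) ⊆ Metric.closedBall 0 r) :
    |(Matrix.of fun i j => b j i).det| ≤ (2 * r / Real.sqrt n) ^ n := by
  simpa only [basisFun_det_apply, Fintype.card_fin] using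
    parallelepiped_in_ball_volume_general (EuclideanSpace.basisFun (Fin n) ℝ) fun t ↦
      hsub (subset_convexHull ℝ _ (add_sum_mem_vertexSet x b t))

end
end

section
/- Let n ≥ 1 be an integer and let (Λ, B_rⁿ) be a robust lattice covering of ℝⁿ with det(Λ) = 1. Then r ≥ √n/2. -/
open MeasureTheory Pointwise

noncomputable section

/-! A single ball containing a fundamental parallelepiped already forces the bound. Choosing the
farther endpoint of one edge direction after another, Apollonius' identity yields a vertex whose
squared distance from the centre of the ball is at least `∑ ‖vᵢ‖² / 4`, where the `vᵢ` are the
edges; hence `2r ≥ √(∑ ‖vᵢ‖²)`. By the AM-GM inequality and then Hadamard's inequality,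
`√(∑ ‖vᵢ‖²) ≥ √n (∏ ‖vᵢ‖)^(1/n) ≥ √n vol^(1/n)`. -/

theorem sqrt_card_mul_prod_rpow_le {ι : Type*} [Fintype ι] {a : ι → ℝ} (ha : ∀ i, 0 ≤ a i) :
    √(Fintype.card ι) * (∏ i, a i) ^ (Fintype.card ι : ℝ)⁻¹ ≤ √(∑ i, a i ^ 2) := by
  rcases isEmpty_or_nonempty ι with _ | _
  · simp
  have card_pos : (0 : ℝ) < Fintype.card ι := by exact_mod_cast Fintype.card_pos
  have prod_nonneg : 0 ≤ ∏ i, a i := Finset.prod_nonneg fun i _ => ha i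
  have geom_mean_le :
      (∏ i, a i ^ 2) ^ (Fintype.card ι : ℝ)⁻¹ ≤ (∑ i, a i ^ 2) / Fintype.card ι := by
    simpa using Real.geom_mean_le_arith_mean Finset.univ (fun _ => 1) (fun i => a i ^ 2)
      (fun _ _ => zero_le_one) (by simpa using card_pos) (fun i _ => sq_nonneg (a i))
  apply Real.le_sqrt_of_sq_le
  calc (√(Fintype.card ι) * (∏ i, a i) ^ (Fintype.card ι : ℝ)⁻¹) ^ 2
      = Fintype.card ι * (∏ i, a i ^ 2) ^ (Fintype.card ι : ℝ)⁻¹ := by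
        rw [mul_pow, Real.sq_sqrt card_pos.le, Finset.prod_pow, Real.rpow_pow_comm prod_nonneg]
    _ ≤ ∑ i, a i ^ 2 := by rwa [le_div_iff₀' card_pos] at geom_mean_le

section InnerProductSpace

variable {ι E : Type*} [NormedAddCommGroup E] [InnerProductSpace ℝ E]

theorem exists_mem_pair_norm_sq_add_le (w u : E) :
    ∃ t ∈ ({0, u} : Set E), ‖w + (2⁻¹ : ℝ) • u‖ ^ 2 + ‖u‖ ^ 2 / 4 ≤ ‖w + t‖ ^ 2 := by
  have apollonius :
      ‖w + u‖ ^ 2 + ‖w‖ ^ 2 = 2 * (‖w + (2⁻¹ : ℝ) • u‖ ^ 2 + ‖u‖ ^ 2 / 4) := by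
    simp only [norm_add_sq_real, inner_smul_right, norm_smul, norm_inv, Real.norm_ofNat]
    ring
  rcases le_total (‖w‖ ^ 2) (‖w + u‖ ^ 2) with h | h
  · exact ⟨u, by simp, by linarith⟩
  · exact ⟨0, by simp, by rw [add_zero]; linarith⟩

theorem exists_mem_sum_pair_norm_sq_add_le (s : Finset ι) (v : ι → E) (w : E) :
    ∃ y ∈ ∑ i ∈ s, ({0, v i} : Set E),
      ‖w + (2⁻¹ : ℝ) • ∑ i ∈ s, v i‖ ^ 2 + (∑ i ∈ s, ‖v i‖ ^ 2) / 4 ≤ ‖w + y‖ ^ 2 := by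
  classical
  induction s using Finset.induction_on generalizing w with
  | empty => exact ⟨0, by simp, by simp⟩
  | insert j s hj ih =>
    obtain ⟨y, hy, hwy⟩ := ih (w + (2⁻¹ : ℝ) • v j)
    obtain ⟨t, ht, hwt⟩ := exists_mem_pair_norm_sq_add_le (w + y) (v j)
    refine ⟨t + y, ?_, ?_⟩
    · rw [Finset.sum_insert hj]
      exact Set.add_mem_add ht hy
    · rw [add_right_comm w _ y] at hwy
      rw [Finset.sum_insert hj, Finset.sum_insert hj, smul_add, ← add_assoc w, add_left_comm w,
        add_comm t]
      linarith

variable [Fintype ι]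

theorem sqrt_sum_norm_sq_le_of_vadd_sum_pair_subset_closedBall {v : ι → E} {x c : E} {r : ℝ}
    (h : x +ᵥ ∑ i, ({0, v i} : Set E) ⊆ Metric.closedBall c r) :
    √(∑ i, ‖v i‖ ^ 2) ≤ 2 * r := by
  obtain ⟨y, hy, hfar⟩ := exists_mem_sum_pair_norm_sq_add_le Finset.univ v (x - c)
  have hnear : ‖x - c + y‖ ≤ r := by
    rw [← add_sub_right_comm, ← mem_closedBall_iff_norm]
    exact h (Set.vadd_mem_vadd_set hy)
  calc √(∑ i, ‖v i‖ ^ 2) ≤ 2 * ‖x - c + y‖ := by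
        rw [Real.sqrt_le_left (by positivity)]
        linarith [sq_nonneg ‖x - c + (2⁻¹ : ℝ) • ∑ i, v i‖]
    _ ≤ 2 * r := by gcongr

variable {n : ℕ} [MeasurableSpace E] [BorelSpace E] [FiniteDimensional ℝ E]

theorem measureReal_parallelepiped_le_prod_norm (hn : Module.finrank ℝ E = n) (v : Fin n → E) :
    volume.real (parallelepiped v) ≤ ∏ i, ‖v i‖ := by
  have : Fact (Module.finrank ℝ E = n) := ⟨hn⟩
  let o : Orientation ℝ E (Fin n) := (Module.finBasisOfFinrankEq ℝ E hn).orientation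
  calc volume.real (parallelepiped v) = |o.volumeForm v| := by
        rw [measureReal_def, ← o.measure_eq_volume, AlternatingMap.measure_parallelepiped,
          ENNReal.toReal_ofReal (abs_nonneg _)]
    _ ≤ ∏ i, ‖v i‖ := o.abs_volumeForm_apply_le v

theorem sqrt_mul_measureReal_parallelepiped_rpow_le (hn : Module.finrank ℝ E = n)
    {v : Fin n → E} {x c : E} {r : ℝ}
    (h : x +ᵥ ∑ i, ({0, v i} : Set E) ⊆ Metric.closedBall c r) :
    √n / 2 * volume.real (parallelepiped v) ^ (n : ℝ)⁻¹ ≤ r := by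
  have sqrt_mul_le : √n * volume.real (parallelepiped v) ^ (n : ℝ)⁻¹ ≤ 2 * r :=
    calc √n * volume.real (parallelepiped v) ^ (n : ℝ)⁻¹
        ≤ √n * (∏ i, ‖v i‖) ^ (n : ℝ)⁻¹ := by
          gcongr
          exact measureReal_parallelepiped_le_prod_norm hn v
      _ ≤ √(∑ i, ‖v i‖ ^ 2) := by
          simpa using sqrt_card_mul_prod_rpow_le fun i => norm_nonneg (v i)
      _ ≤ 2 * r := sqrt_sum_norm_sq_le_of_vadd_sum_pair_subset_closedBall h
  linarith

end InnerProductSpace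

theorem vertexSet_eq_vadd_sum_pair {n : ℕ} (x : EuclideanSpace ℝ (Fin n))
    (v : Fin n → EuclideanSpace ℝ (Fin n)) :
    vertexSet x v = x +ᵥ ∑ i, ({0, v i} : Set (EuclideanSpace ℝ (Fin n))) := by
  ext y
  simp only [vertexSet, Set.mem_ofPred_eq, Set.mem_vadd_set, Set.mem_fintype_sum, vadd_eq_add]
  constructor
  · rintro ⟨lam, hlam, rfl⟩
    refine ⟨_, ⟨fun i => lam i • v i, fun i => ?_, rfl⟩, rfl⟩
    rcases hlam i with h | h <;> simp [h]
  · rintro ⟨_, ⟨g, hg, rfl⟩, rfl⟩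
    have hcoeff : ∀ i, ∃ l : ℝ, (l = 0 ∨ l = 1) ∧ g i = l • v i := fun i => by
      rcases hg i with h | h
      · exact ⟨0, by simp, by simp [h]⟩
      · exact ⟨1, by simp, by simpa using h⟩
    choose lam hlam hg using hcoeff
    exact ⟨lam, hlam, by simp only [hg]⟩

theorem convexHull_vertexSet {n : ℕ} (x : EuclideanSpace ℝ (Fin n))
    (v : Fin n → EuclideanSpace ℝ (Fin n)) :
    convexHull ℝ (vertexSet x v) = x +ᵥ parallelepiped v := by
  rw [vertexSet_eq_vadd_sum_pair, convexHull_vadd, parallelepiped_eq_convexHull]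

theorem robust_covering_radius_lower_bound_general {n : ℕ} {Λ P : Set (EuclideanSpace ℝ (Fin n))}
    {d r : ℝ} {c : EuclideanSpace ℝ (Fin n)} (hd : 0 ≤ d) (hP : IsFundParallelepiped Λ d P)
    (hPc : P ⊆ Metric.closedBall c r) :
    √n / 2 * d ^ (n : ℝ)⁻¹ ≤ r := by
  obtain ⟨x, v, -, rfl, -, hvol⟩ := hP
  have hvol_real : volume.real (parallelepiped v) = d := by
    rw [convexHull_vertexSet, measure_vadd] at hvol
    rw [measureReal_def, hvol, ENNReal.toReal_ofReal hd]
  have hvertices := (subset_convexHull ℝ (vertexSet x v)).trans hPc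
  rw [vertexSet_eq_vadd_sum_pair] at hvertices
  rw [← hvol_real]
  exact sqrt_mul_measureReal_parallelepiped_rpow_le finrank_euclideanSpace_fin hvertices

/-- For a robust lattice covering `(Λ, B_rⁿ)` of `ℝⁿ` with `det(Λ) = 1`, one has
`r ≥ √n / 2`. -/
theorem robust_covering_radius_lower_bound (n : ℕ) (hn : 1 ≤ n)
    (b : Fin n → EuclideanSpace ℝ (Fin n)) (r : ℝ)
    (hrob : IsRobustCovering b r) (hdet : latticeDet b = 1) :
    Real.sqrt n / 2 ≤ r := by
  obtain ⟨P, hP, hP0⟩ := hrob.2 0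
  simpa [hdet] using robust_covering_radius_lower_bound_general zero_le_one (hdet ▸ hP) hP0

end
end

section
/- Let n, d ≥ 1 be integers, let K ⊆ ℝⁿ be a convex body, let δ := ρ̄(ℤⁿ + K), and set C := (4^d · d^{d/2} + 1)^{d·2^d} + 1. For y = (y₁, …, y_d) ∈ ([0,1)ⁿ)^d define K_y := ⋃_{λ ∈ {0,1}^d} (K + λ₁y₁ + ⋯ + λ_d y_d). Then the Lebesgue measure of the set of y ∈ ([0,1)ⁿ)^d such that ρ̄(ℤⁿ + K_y) ≤ (Cd)^{2^d − 1} · δ^{2^d} is at least 1 − 1/C. -/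
/-!
Project to the torus `T = ℝⁿ/ℤⁿ` with its Haar probability measure, and let `U ⊆ T` be the
complement of the image of `K`. Uncovered densities become measures of complements in `T`, and the
uncovered part of `K ∪ (K + y)` becomes `U ∩ (y + U)`. By Fubini and invariance the mean of
`μ (U ∩ (y + U))` over `y ∈ T` is `μ(U)²`, so by Markov's inequality it exceeds `a μ(U)²` with
probability at most `1/a`. Doubling successively with `y₁, …, y_d` and iterating `u ↦ a u²` gives
`a ^ (2 ^ d - 1) * μ(U) ^ 2 ^ d`, except with probability at most `d/a`. The theorem is the
case `a = C d`.
-/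

open MeasureTheory Pointwise

noncomputable section

open scoped ENNReal

section CubeUnion

variable {M : Type*} [AddCommMonoid M] {d : ℕ}

/-- The union `⋃_{ε ∈ {0,1}^d} (A + ε₁y₁ + ⋯ + ε_d y_d)`, written `K_y` in the paper for `A = K`.
The bits `ε i` are natural number multiples, so that the definition makes sense in the torus as
well as in `ℝⁿ`. -/
def cubeUnion (A : Set M) (y : Fin d → M) : Set M :=
  ⋃ ε : Fin d → Fin 2, (∑ i, (ε i : ℕ) • y i) +ᵥ A

lemma cubeUnion_zero (A : Set M) (y : Fin 0 → M) : cubeUnion A y = A := by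
  simp [cubeUnion, Set.iUnion_const]

lemma cubeUnion_cons (A : Set M) (x : M) (y : Fin d → M) :
    cubeUnion A (Fin.cons x y : Fin (d + 1) → M) = cubeUnion (A ∪ (x +ᵥ A)) y := by
  ext z
  simp only [cubeUnion, Set.mem_iUnion, Fin.exists_fin_succ_pi, Fin.exists_fin_two,
    Fin.sum_univ_succ, Fin.cons_zero, Fin.cons_succ, Fin.val_zero, Fin.val_one, zero_smul,
    one_smul, zero_add, Set.vadd_set_union, vadd_vadd, Set.mem_union, exists_or, add_comm x]

lemma image_cubeUnion {N : Type*} [AddCommMonoid N] (f : M →+ N) (A : Set M) (y : Fin d → M) :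
    f '' cubeUnion A y = cubeUnion (f '' A) (f ∘ y) := by
  simp only [cubeUnion, Set.image_iUnion, Set.image_vadd_distrib, map_sum, map_nsmul,
    Function.comp_apply]

lemma biUnion_add_singleton_eq_cubeUnion {R : Type*} [Semiring R] [Module R M] (A : Set M)
    (y : Fin d → M) :
    ⋃ lam ∈ {lam : Fin d → R | ∀ i, lam i = 0 ∨ lam i = 1}, (A + {∑ i, lam i • y i}) =
      cubeUnion A y := by
  have h_range : {lam : Fin d → R | ∀ i, lam i = 0 ∨ lam i = 1} =
      Set.range fun (ε : Fin d → Fin 2) i ↦ ((ε i : ℕ) : R) := by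
    ext lam
    have h_bit (i : Fin d) : (lam i = 0 ∨ lam i = 1) ↔ ∃ e : Fin 2, ((e : ℕ) : R) = lam i := by
      simp [Fin.exists_fin_two, eq_comm]
    simp only [Set.mem_ofPred_eq, Set.mem_range, h_bit, Classical.skolem, funext_iff]
  simp only [h_range, Set.biUnion_range, cubeUnion, Nat.cast_smul_eq_nsmul, add_comm A,
    ← Set.singleton_vadd, vadd_eq_add]

end CubeUnion

section Group

variable {G : Type*} [AddCommGroup G] [MeasurableSpace G] [MeasurableAdd₂ G] [MeasurableNeg G]

lemma measurableSet_setOf_mem_vadd {X : Type*} [MeasurableSpace X] {f : X → G}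
    (hf : Measurable f) {A : Set G} (hA : MeasurableSet A) :
    MeasurableSet {p : X × G | p.2 ∈ f p.1 +ᵥ A} := by
  simp only [Set.mem_vadd_set_iff_neg_vadd_mem, vadd_eq_add]
  exact ((hf.comp measurable_fst).neg.add measurable_snd) hA

lemma measurableSet_setOf_mem_cubeUnion {d : ℕ} {A : Set G} (hA : MeasurableSet A) :
    MeasurableSet {p : (Fin d → G) × G | p.2 ∈ cubeUnion A p.1} := by
  simp only [cubeUnion, Set.mem_iUnion, Set.ofPred_exists]
  exact .iUnion fun ε ↦ measurableSet_setOf_mem_vadd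
    (f := fun y : Fin d → G ↦ ∑ i, (ε i : ℕ) • y i) (by fun_prop) hA

lemma measurableSet_cubeUnion {d : ℕ} {A : Set G} (hA : MeasurableSet A) (y : Fin d → G) :
    MeasurableSet (cubeUnion A y) :=
  measurable_prodMk_left (measurableSet_setOf_mem_cubeUnion hA)

lemma measurable_measure_cubeUnion_compl {d : ℕ} (μ : Measure G) [SFinite μ] {A : Set G}
    (hA : MeasurableSet A) : Measurable fun y : Fin d → G ↦ μ (cubeUnion A y)ᶜ :=
  measurable_measure_prodMk_left (measurableSet_setOf_mem_cubeUnion hA).compl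

lemma measurableSet_setOf_mem_inter_vadd {U V : Set G} (hU : MeasurableSet U)
    (hV : MeasurableSet V) : MeasurableSet {p : G × G | p.2 ∈ U ∩ (p.1 +ᵥ V)} :=
  (measurable_snd hU).inter (measurableSet_setOf_mem_vadd measurable_id hV)

lemma measurable_measure_inter_vadd (μ : Measure G) [SFinite μ] {U V : Set G}
    (hU : MeasurableSet U) (hV : MeasurableSet V) :
    Measurable fun y : G ↦ μ (U ∩ (y +ᵥ V)) :=
  measurable_measure_prodMk_left (measurableSet_setOf_mem_inter_vadd hU hV)

lemma measure_setOf_mem_vadd (μ : Measure G) [μ.IsAddLeftInvariant] [μ.IsNegInvariant] {V : Set G}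
    (hV : MeasurableSet V) (x : G) : μ {y | x ∈ y +ᵥ V} = μ V := by
  simpa only [Set.mem_vadd_set_iff_neg_vadd_mem, vadd_eq_add, neg_add_eq_sub, Set.preimage] using
    (Measure.measurePreserving_sub_left μ x).measure_preimage hV.nullMeasurableSet

lemma lintegral_measure_inter_vadd (μ ν : Measure G) [SFinite μ] [SFinite ν]
    [ν.IsAddLeftInvariant] [ν.IsNegInvariant] {U V : Set G} (hU : MeasurableSet U)
    (hV : MeasurableSet V) : ∫⁻ y, μ (U ∩ (y +ᵥ V)) ∂ν = μ U * ν V := by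
  have hS := measurableSet_setOf_mem_inter_vadd hU hV
  have section_measure (x : G) :
      ν {y | x ∈ U ∩ (y +ᵥ V)} = U.indicator (fun _ ↦ ν V) x := by
    by_cases hx : x ∈ U <;> simp [hx, measure_setOf_mem_vadd ν hV x]
  calc ∫⁻ y, μ (U ∩ (y +ᵥ V)) ∂ν = ν.prod μ {p | p.2 ∈ U ∩ (p.1 +ᵥ V)} :=
        (Measure.prod_apply hS).symm
    _ = ∫⁻ x, ν {y | x ∈ U ∩ (y +ᵥ V)} ∂μ := Measure.prod_apply_symm hS
    _ = μ U * ν V := by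
        simp only [section_measure, lintegral_indicator_const hU, mul_comm]

lemma measure_setOf_lt_measure_inter_vadd_le (μ : Measure G) [IsFiniteMeasure μ]
    [μ.IsAddLeftInvariant] [μ.IsNegInvariant] (a : ℝ≥0∞) {U : Set G} (hU : MeasurableSet U) :
    μ {y | a * μ U ^ 2 < μ (U ∩ (y +ᵥ U))} ≤ a⁻¹ := by
  by_cases hU₀ : μ U = 0
  · have h_inter (y : G) : μ (U ∩ (y +ᵥ U)) = 0 := measure_mono_null Set.inter_subset_left hU₀
    simp [h_inter]
  have h_markov : a * μ U ^ 2 * μ {y | a * μ U ^ 2 ≤ μ (U ∩ (y +ᵥ U))} ≤ μ U ^ 2 := by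
    simpa only [lintegral_measure_inter_vadd μ μ hU hU, ← sq] using
      mul_meas_ge_le_lintegral (μ := μ) (measurable_measure_inter_vadd μ hU hU) (a * μ U ^ 2)
  calc μ {y | a * μ U ^ 2 < μ (U ∩ (y +ᵥ U))}
      ≤ μ {y | a * μ U ^ 2 ≤ μ (U ∩ (y +ᵥ U))} := measure_mono fun _ ↦ le_of_lt (α := ℝ≥0∞)
    _ ≤ a⁻¹ := by
      rw [ENNReal.le_inv_iff_mul_le, mul_comm,
        ← ENNReal.mul_le_mul_iff_right (pow_ne_zero 2 hU₀) (by finiteness)]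
      simpa only [mul_one, mul_left_comm, mul_assoc] using h_markov

end Group

lemma measure_pi_fin_succ {d : ℕ} {X : Fin (d + 1) → Type*} [∀ i, MeasurableSpace (X i)]
    (μ : ∀ i, Measure (X i)) [∀ i, SigmaFinite (μ i)] {S : Set (∀ i, X i)} (hS : MeasurableSet S) :
    Measure.pi μ S =
      ∫⁻ x, Measure.pi (fun i : Fin d ↦ μ i.succ) {y | Fin.cons x y ∈ S} ∂μ 0 := by
  have h := (measurePreserving_piFinSuccAbove μ 0).symm
  rw [← h.measure_preimage hS.nullMeasurableSet, Measure.prod_apply (h.measurable hS)]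
  have h_cons (x : X 0) (y : ∀ i : Fin d, X i.succ) :
      (MeasurableEquiv.piFinSuccAbove X 0).symm (x, y) = Fin.cons x y := by
    ext i; cases i using Fin.cases <;> rfl
  simp only [← h_cons]
  rfl

lemma pow_two_pow_pred_mul_mul_sq_pow {M : Type*} [CommMonoid M] (a u : M) (d : ℕ) :
    a ^ (2 ^ d - 1) * (a * u ^ 2) ^ 2 ^ d = a ^ (2 ^ (d + 1) - 1) * u ^ 2 ^ (d + 1) := by
  have h_exp : 2 ^ d - 1 + 2 ^ d = 2 ^ (d + 1) - 1 := by
    have := Nat.one_le_two_pow (n := d)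
    omega
  rw [mul_pow, ← mul_assoc, ← pow_add, h_exp, ← pow_mul, ← pow_succ']

section Probability

variable {G : Type*} [AddCommGroup G] [MeasurableSpace G] [MeasurableAdd₂ G] [MeasurableNeg G]
  (μ : Measure G) [IsProbabilityMeasure μ] [μ.IsAddLeftInvariant] [μ.IsNegInvariant]

theorem measure_setOf_lt_measure_cubeUnion_compl_le (a : ℝ≥0∞) (d : ℕ) {A : Set G}
    (hA : MeasurableSet A) :
    Measure.pi (fun _ : Fin d ↦ μ)
      {y | a ^ (2 ^ d - 1) * μ Aᶜ ^ 2 ^ d < μ (cubeUnion A y)ᶜ} ≤ d * a⁻¹ := by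
  induction d generalizing A with
  | zero => simp [cubeUnion_zero]
  | succ d ih =>
    let B : Set G := {x | a * μ Aᶜ ^ 2 < μ (A ∪ (x +ᵥ A))ᶜ}
    let S : Set (Fin (d + 1) → G) :=
      {y | a ^ (2 ^ (d + 1) - 1) * μ Aᶜ ^ 2 ^ (d + 1) < μ (cubeUnion A y)ᶜ}
    have hS : MeasurableSet S :=
      measurableSet_lt measurable_const (measurable_measure_cubeUnion_compl μ hA)
    have h_section (x : G) : Measure.pi (fun _ ↦ μ) {y : Fin d → G | Fin.cons x y ∈ S} ≤
        B.indicator 1 x + d * a⁻¹ := by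
      by_cases hx : x ∈ B
      · rw [Set.indicator_of_mem hx]
        exact prob_le_one.trans le_self_add
      · rw [Set.indicator_of_notMem hx, zero_add]
        refine (measure_mono fun y hy ↦ ?_).trans (ih (hA.union (hA.const_vadd x)))
        change _ < μ (cubeUnion A (Fin.cons x y : Fin (d + 1) → G))ᶜ at hy
        rw [cubeUnion_cons] at hy
        refine hy.trans_le' ?_
        rw [← pow_two_pow_pred_mul_mul_sq_pow]
        gcongr
        exact not_lt.1 hx
    calc Measure.pi (fun _ ↦ μ) S
      _ = ∫⁻ x, Measure.pi (fun _ ↦ μ) {y : Fin d → G | Fin.cons x y ∈ S} ∂μ :=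
          measure_pi_fin_succ _ hS
      _ ≤ ∫⁻ x, (B.indicator 1 x + d * a⁻¹) ∂μ := lintegral_mono h_section
      _ ≤ μ B + d * a⁻¹ := by
        rw [lintegral_add_right _ measurable_const, lintegral_const, measure_univ, mul_one]
        gcongr
        exact lintegral_indicator_one_le B
      _ ≤ a⁻¹ + d * a⁻¹ := by
        gcongr
        simpa only [B, Set.compl_union, ← Set.vadd_set_compl] using
          measure_setOf_lt_measure_inter_vadd_le μ a hA.compl
      _ = (d + 1 : ℕ) * a⁻¹ := by rw [Nat.cast_add_one, add_one_mul, add_comm]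

theorem ofReal_one_sub_le_measure_setOf_cubeUnion_compl_le {a : ℝ} (ha : 0 < a) (d : ℕ) {A : Set G}
    (hA : MeasurableSet A) :
    ENNReal.ofReal (1 - d / a) ≤ Measure.pi (fun _ : Fin d ↦ μ)
      {y | μ.real (cubeUnion A y)ᶜ ≤ a ^ (2 ^ d - 1) * μ.real Aᶜ ^ 2 ^ d} := by
  let S : Set (Fin d → G) :=
    {y | ENNReal.ofReal a ^ (2 ^ d - 1) * μ Aᶜ ^ 2 ^ d < μ (cubeUnion A y)ᶜ}
  have hS : MeasurableSet S :=
    measurableSet_lt measurable_const (measurable_measure_cubeUnion_compl μ hA)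
  have hS_compl : Sᶜ = {y | μ.real (cubeUnion A y)ᶜ ≤ a ^ (2 ^ d - 1) * μ.real Aᶜ ^ 2 ^ d} := by
    ext y
    rw [Set.mem_compl_iff, Set.mem_ofPred_eq, Set.mem_ofPred_eq, not_lt,
      ← ENNReal.toReal_le_toReal (by finiteness) (by finiteness), ENNReal.toReal_mul,
      ENNReal.toReal_pow, ENNReal.toReal_pow, ENNReal.toReal_ofReal ha.le]
    rfl
  rw [← hS_compl, prob_compl_eq_one_sub hS, ENNReal.ofReal_sub _ (by positivity),
    ENNReal.ofReal_one, ENNReal.ofReal_div_of_pos ha, ENNReal.ofReal_natCast,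
    ENNReal.div_eq_inv_mul, mul_comm]
  gcongr
  exact measure_setOf_lt_measure_cubeUnion_compl_le μ (ENNReal.ofReal a) d hA

end Probability

section Torus

variable {n d : ℕ}

/-- The quotient map `ℝⁿ → ℝⁿ/ℤⁿ`, through which `ℤⁿ`-periodic subsets of `ℝⁿ` are studied as
subsets of the torus. -/
def torusMk (n : ℕ) : EuclideanSpace ℝ (Fin n) →+ UnitAddTorus (Fin n) where
  toFun x i := x i
  map_zero' := rfl
  map_add' _ _ := rfl

instance : IsProbabilityMeasure (volume : Measure UnitAddCircle) :=
  ⟨UnitAddCircle.measure_univ⟩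

instance : (volume : Measure (UnitAddTorus (Fin n))).IsNegInvariant :=
  Measure.pi.isNegInvariant _

lemma measurable_torusMk : Measurable (torusMk n) := by
  refine measurable_pi_lambda _ fun i ↦ AddCircle.measurable_mk'.comp ?_
  fun_prop

lemma torusMk_surjective : Function.Surjective (torusMk n) := fun t ↦
  have ⟨x, hx⟩ := (QuotientAddGroup.mk_surjective (s := AddSubgroup.zmultiples (1 : ℝ))).comp_left t
  ⟨WithLp.toLp 2 x, hx⟩

lemma torusMk_eq_zero_iff {x : EuclideanSpace ℝ (Fin n)} : torusMk n x = 0 ↔ x ∈ intLat n := by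
  refine funext_iff.trans (forall_congr' fun i ↦ ?_)
  change (x i : UnitAddCircle) = 0 ↔ _
  simp only [AddCircle.coe_eq_zero_iff, zsmul_one, eq_comm (a := x i)]

lemma preimage_image_torusMk (A : Set (EuclideanSpace ℝ (Fin n))) :
    torusMk n ⁻¹' (torusMk n '' A) = intLat n + A := by
  ext x
  simp only [Set.mem_preimage, Set.mem_image, Set.mem_add, ← torusMk_eq_zero_iff]
  constructor
  · rintro ⟨a, ha, hax⟩
    exact ⟨x - a, by rw [map_sub, hax, sub_self], a, ha, sub_add_cancel x a⟩
  · rintro ⟨z, hz, a, ha, rfl⟩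
    exact ⟨a, ha, by rw [map_add, hz, zero_add]⟩

lemma countable_intLat : (intLat n).Countable := by
  refine (Set.countable_range fun m : Fin n → ℤ ↦ WithLp.toLp 2 fun i ↦ (m i : ℝ)).mono ?_
  intro x hx
  choose m hm using hx
  exact ⟨m, by ext i; exact (hm i).symm⟩

lemma measurableSet_image_torusMk {A : Set (EuclideanSpace ℝ (Fin n))} (hA : MeasurableSet A) :
    MeasurableSet (torusMk n '' A) := by
  rw [← measurable_torusMk.measurableSet_preimage_iff_of_surjective torusMk_surjective,
    preimage_image_torusMk, ← vadd_eq_add, ← Set.iUnion_vadd_set]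
  exact .biUnion countable_intLat fun z _ ↦ hA.const_vadd z

lemma measurePreserving_torusMk :
    MeasurePreserving (torusMk n) (volume.restrict (unitCube n)) volume := by
  have h_pi : MeasurePreserving (fun (x : Fin n → ℝ) i ↦ (x i : UnitAddCircle))
      (volume.restrict (Set.univ.pi fun _ ↦ Set.Ico 0 1)) volume := by
    rw [volume_pi, Measure.restrict_pi_pi]
    refine measurePreserving_pi _ _ fun _ ↦ ?_
    simpa only [restrict_Ico_eq_restrict_Ioc, zero_add] using UnitAddCircle.measurePreserving_mk 0
  have h_toLp := (EuclideanSpace.volume_preserving_symm_measurableEquiv_toLp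
    (Fin n)).restrict_preimage (MeasurableSet.univ_pi fun _ ↦
      measurableSet_Ico (a := (0 : ℝ)) (b := 1))
  have h_cube : (MeasurableEquiv.toLp 2 (Fin n → ℝ)).symm ⁻¹' Set.univ.pi (fun _ ↦ Set.Ico 0 1) =
      unitCube n := by
    ext x
    simp [unitCube]
  exact h_pi.comp (h_cube ▸ h_toLp)

lemma measurePreserving_torusMk_comp :
    MeasurePreserving (fun y : Fin d → EuclideanSpace ℝ (Fin n) ↦ torusMk n ∘ y)
      (volume.restrict (Set.univ.pi fun _ ↦ unitCube n)) (Measure.pi fun _ ↦ volume) := by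
  rw [volume_pi, Measure.restrict_pi_pi]
  exact measurePreserving_pi _ _ fun _ ↦ measurePreserving_torusMk

lemma rhoBar_eq_volume_real {A : Set (EuclideanSpace ℝ (Fin n))} (hA : MeasurableSet A) :
    rhoBar A = volume.real (torusMk n '' A)ᶜ := by
  have hA' := (measurableSet_image_torusMk hA).compl
  rw [rhoBar, measureReal_def, ← measurePreserving_torusMk.measure_preimage hA'.nullMeasurableSet,
    Measure.restrict_apply (measurable_torusMk hA'), Set.preimage_compl, preimage_image_torusMk,
    Set.sdiff_eq, Set.inter_comm]

end Torus

theorem random_translates_good_probability_general (n d : ℕ)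
    {K : Set (EuclideanSpace ℝ (Fin n))} (hK : MeasurableSet K) {a : ℝ} (ha : 0 < a) :
    ENNReal.ofReal (1 - d / a) ≤
      volume {y : Fin d → EuclideanSpace ℝ (Fin n) | (∀ i, y i ∈ unitCube n) ∧
        rhoBar (cubeUnion K y) ≤ a ^ (2 ^ d - 1) * rhoBar K ^ 2 ^ d} := by
  let T := torusMk n '' K
  have hT : MeasurableSet T := measurableSet_image_torusMk hK
  let S : Set (Fin d → UnitAddTorus (Fin n)) :=
    {t | volume.real (cubeUnion T t)ᶜ ≤ a ^ (2 ^ d - 1) * volume.real Tᶜ ^ 2 ^ d}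
  have hS : MeasurableSet S := measurableSet_le
    (measurable_measure_cubeUnion_compl volume hT).ennreal_toReal measurable_const
  calc ENNReal.ofReal (1 - d / a) ≤ Measure.pi (fun _ ↦ volume) S :=
        ofReal_one_sub_le_measure_setOf_cubeUnion_compl_le volume ha d hT
    _ = volume ((torusMk n ∘ ·) ⁻¹' S ∩ Set.univ.pi fun _ ↦ unitCube n) := by
        rw [← measurePreserving_torusMk_comp.measure_preimage hS.nullMeasurableSet,
          Measure.restrict_apply (measurePreserving_torusMk_comp.measurable hS)]
    _ = volume {y : Fin d → EuclideanSpace ℝ (Fin n) | (∀ i, y i ∈ unitCube n) ∧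
          rhoBar (cubeUnion K y) ≤ a ^ (2 ^ d - 1) * rhoBar K ^ 2 ^ d} := by
        congr 1
        ext y
        simp only [rhoBar_eq_volume_real hK, rhoBar_eq_volume_real (measurableSet_cubeUnion hK y),
          image_cubeUnion, S, T, Set.mem_inter_iff, Set.mem_preimage, Set.mem_ofPred_eq,
          Set.mem_univ_pi, and_comm]

/-- **Claim 3.5.** Let `K ⊆ ℝⁿ` be a convex body with `δ = ρ̄(ℤⁿ + K)`, and let
`C = (4^d d^{d/2} + 1)^{d·2^d} + 1`. For random translates `y₁, …, y_d ∈ [0,1)ⁿ`, with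
probability at least `1 − 1/C` the union `K_y = ⋃_{λ ∈ {0,1}^d} (K + λ₁y₁ + ⋯ + λ_d y_d)`
satisfies `ρ̄(ℤⁿ + K_y) ≤ (Cd)^{2^d − 1} δ^{2^d}`. -/
theorem random_translates_good_probability (n d : ℕ) (hn : 1 ≤ n) (hd : 1 ≤ d)
    (K : Set (EuclideanSpace ℝ (Fin n)))
    (hKcpt : IsCompact K) (hKconv : Convex ℝ K) (hKint : (interior K).Nonempty)
    (δ C : ℝ) (hδ : δ = rhoBar K)
    (hC : C = (4 ^ d * (d : ℝ) ^ ((d : ℝ) / 2) + 1) ^ (d * 2 ^ d) + 1) :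
    ENNReal.ofReal (1 - 1 / C) ≤
      volume {y : Fin d → EuclideanSpace ℝ (Fin n) |
        (∀ i, y i ∈ unitCube n) ∧
        rhoBar (⋃ lam ∈ {lam : Fin d → ℝ | ∀ i, lam i = 0 ∨ lam i = 1},
            (K + {∑ i, lam i • y i})) ≤
          (C * d) ^ (2 ^ d - 1) * δ ^ 2 ^ d} := by
  have hd₀ : (0 : ℝ) < d := Nat.cast_pos.2 hd
  have hC₀ : 0 < C := by rw [hC]; positivity
  have h_ratio : (d : ℝ) / (C * d) = 1 / C := by rw [div_mul_cancel_right₀ hd₀.ne', one_div]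
  simpa only [biUnion_add_singleton_eq_cubeUnion, hδ, h_ratio] using
    random_translates_good_probability_general n d hKcpt.measurableSet (mul_pos hC₀ hd₀)

end
end

section
/- Let n, d ≥ 1 be integers, let K ⊆ ℝⁿ be a convex body, let δ := ρ̄(ℤⁿ + K), and set C := (4^d · d^{d/2} + 1)^{d·2^d} + 1. Let Λ_d ⊆ ℝ^d be a lattice with det(Λ_d) = 1, generated by linearly independent vectors b₁, …, b_d, let B := [b₁, …, b_d] be the corresponding d×d matrix, and let P be a fundamental parallelepiped of Λ_d having the origin as a vertex, with vertex set V(P). For y = (y₁, …, y_d) ∈ ([0,1)ⁿ)^d define the linear map φ_y(z) := [y₁, …, y_d]·B⁻¹·z (so φ_y(Σⱼ μⱼbⱼ) = Σⱼ μⱼyⱼ for integers μⱼ), and set K_y^P := ⋃_{x ∈ V(P)} (K + φ_y(x)). Then the Lebesgue measure of the set of y ∈ ([0,1)ⁿ)^d such that ρ̄(ℤⁿ + K_y^P) ≤ (Cd)^{2^d − 1} · δ^{2^d} is at least 1 − 1/C. -/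
open MeasureTheory Pointwise Matrix

noncomputable section

/-!
Work on the torus `(ℝ/ℤ)ⁿ` with its Haar probability measure `μ`, and let `U` be the region left
uncovered by `K`. If `t` is uniform, then `μ (U ∩ (U + t))` has mean `μ U ^ 2`, so by Markov's
inequality it is at most `L * μ U ^ 2` outside an event of probability `1 / L`. Iterating
`U ↦ U ∩ (U + uᵢ)` over `d` independent uniform translations `uᵢ` gives the region left uncovered by
the translates of `K` by all subset sums of the `uᵢ`; outside an event of probability `d / L` its
measure is at most `L ^ (2 ^ d - 1) * μ U ^ 2 ^ d`. Take `L = C * d`.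

The vertices of `P` are the subset sums of its edge vectors `vᵢ = ∑ⱼ Mᵢⱼ bⱼ`, where `M` is a
nonsingular integer matrix, so `φ_y` maps them to the subset sums of the coordinates of `M y`. As
the torus is divisible, `y ↦ M y` is a surjective endomorphism of its `d`-th power and hence
preserves Haar measure: the coordinates of `M y` modulo `ℤⁿ` are again independent and uniform.
-/

open scoped ENNReal

section SubsetSums

variable {ι G : Type*} [AddCommGroup G]

/-- The intersection of the translates of `U` by the subset sums `∑ i ∈ s, u i`, `s ⊆ T`. If `U` is
the region left uncovered by a set `A`, this is the region left uncovered by the corresponding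
translates of `A`. -/
def interTranslates (U : Set G) (u : ι → G) (T : Finset ι) : Set G :=
  {x | ∀ s ⊆ T, x - ∑ i ∈ s, u i ∈ U}

lemma interTranslates_mono {U V : Set G} (hUV : U ⊆ V) (u : ι → G) (T : Finset ι) :
    interTranslates U u T ⊆ interTranslates V u T :=
  fun _ hx s hs ↦ hUV (hx s hs)

@[simp]
lemma interTranslates_empty (U : Set G) (u : ι → G) : interTranslates U u ∅ = U := by
  ext x
  simp [interTranslates, Finset.subset_empty]

lemma interTranslates_congr (U : Set G) {u w : ι → G} {T : Finset ι} (h : ∀ i ∈ T, u i = w i) :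
    interTranslates U u T = interTranslates U w T := by
  ext x
  refine forall₂_congr fun s hs ↦ ?_
  rw [Finset.sum_congr rfl fun i hi ↦ h i (hs hi)]

lemma interTranslates_insert [DecidableEq ι] (U : Set G) (u : ι → G) {T : Finset ι} {a : ι}
    (ha : a ∉ T) :
    interTranslates U u (insert a T) =
      interTranslates U u T ∩ (· - u a) ⁻¹' interTranslates U u T := by
  have sum_insert {s : Finset ι} (hs : s ⊆ T) (x : G) :
      x - ∑ i ∈ insert a s, u i = x - u a - ∑ i ∈ s, u i := by
    rw [Finset.sum_insert fun h ↦ ha (hs h), sub_sub]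
  ext x
  constructor
  · refine fun hx ↦ ⟨fun s hs ↦ hx s (hs.trans (Finset.subset_insert a T)), fun s hs ↦ ?_⟩
    exact sum_insert hs x ▸ hx _ (Finset.insert_subset_insert a hs)
  · rintro ⟨hx, hxa⟩ s hs
    have hsT : s.erase a ⊆ T := Finset.subset_insert_iff.1 hs
    by_cases has : a ∈ s
    · rw [← Finset.insert_erase has, sum_insert hsT]
      exact hxa _ hsT
    · exact hx s (Finset.erase_eq_of_notMem has ▸ hsT)

lemma compl_image_iUnion_add_sum {E : Type*} [AddCommGroup E] [Fintype ι] (f : E →+ G)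
    (K : Set E) (z : ι → E) :
    (f '' ⋃ s : Finset ι, (K + {∑ i ∈ s, z i}))ᶜ =
      interTranslates (f '' K)ᶜ (fun i ↦ f (z i)) Finset.univ := by
  ext x
  have h (s : Finset ι) : x ∈ f '' (K + {∑ i ∈ s, z i}) ↔ x - ∑ i ∈ s, f (z i) ∈ f '' K := by
    rw [Set.add_singleton, Set.image_image, Set.mem_image, Set.mem_image]
    simp only [map_add, map_sum, eq_sub_iff_add_eq]
  simp only [Set.image_iUnion, Set.mem_compl_iff, Set.mem_iUnion, not_exists, interTranslates,
    Finset.subset_univ, forall_const, Set.mem_ofPred_eq, h]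

variable [MeasurableSpace G] [MeasurableAdd₂ G] [MeasurableSub₂ G]

lemma measurableSet_mem_interTranslates {U : Set G} (hU : MeasurableSet U) (T : Finset ι) :
    MeasurableSet {p : (ι → G) × G | p.2 ∈ interTranslates U p.1 T} := by
  have h : {p : (ι → G) × G | p.2 ∈ interTranslates U p.1 T} =
      ⋂ s ∈ T.powerset, (fun p ↦ p.2 - ∑ i ∈ s, p.1 i) ⁻¹' U := by
    ext p
    simp [interTranslates]
  rw [h]
  exact Finset.measurableSet_biInter _ fun s _ ↦ hU.preimage (by fun_prop)

lemma measurableSet_interTranslates {U : Set G} (hU : MeasurableSet U) (u : ι → G)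
    (T : Finset ι) : MeasurableSet (interTranslates U u T) :=
  measurable_prodMk_left (measurableSet_mem_interTranslates hU T)

lemma measurable_measure_interTranslates (μ : Measure G) [SFinite μ] {U : Set G}
    (hU : MeasurableSet U) (T : Finset ι) :
    Measurable fun u : ι → G ↦ μ (interTranslates U u T) :=
  measurable_measure_prodMk_left (measurableSet_mem_interTranslates hU T)

end SubsetSums

section RandomTranslate

variable {G : Type*} [AddCommGroup G] [MeasurableSpace G] [MeasurableSub₂ G]

lemma measurableSet_mem_inter_preimage_sub {V W : Set G} (hV : MeasurableSet V)
    (hW : MeasurableSet W) : MeasurableSet {p : G × G | p.2 ∈ V ∩ (· - p.1) ⁻¹' W} :=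
  (measurable_snd hV).inter ((measurable_snd.sub measurable_fst) hW)

variable [MeasurableAdd G] [MeasurableNeg G]

lemma lintegral_measure_inter_preimage_sub (μ : Measure G) [SFinite μ] [μ.IsAddLeftInvariant]
    [μ.IsNegInvariant] {V W : Set G} (hV : MeasurableSet V) (hW : MeasurableSet W) :
    ∫⁻ t, μ (V ∩ (· - t) ⁻¹' W) ∂μ = μ W * μ V := by
  have hS := measurableSet_mem_inter_preimage_sub hV hW
  calc ∫⁻ t, μ (V ∩ (· - t) ⁻¹' W) ∂μ
      = (μ.prod μ) {p : G × G | p.2 ∈ V ∩ (· - p.1) ⁻¹' W} := (Measure.prod_apply hS).symm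
    _ = ∫⁻ x, μ {t | x ∈ V ∩ (· - t) ⁻¹' W} ∂μ := Measure.prod_apply_symm hS
    _ = ∫⁻ x, V.indicator (fun _ ↦ μ W) x ∂μ := by
      refine lintegral_congr fun x ↦ ?_
      by_cases hx : x ∈ V
      · simp only [Set.mem_inter_iff, hx, true_and, Set.indicator_of_mem]
        exact (Measure.measurePreserving_sub_left μ x).measure_preimage hW.nullMeasurableSet
      · simp [hx]
    _ = μ W * μ V := lintegral_indicator_const hV _

lemma measure_mul_sq_lt_measure_inter_preimage_sub_le (μ : Measure G) [IsFiniteMeasure μ]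
    [μ.IsAddLeftInvariant] [μ.IsNegInvariant] {V : Set G} (hV : MeasurableSet V) (L : ℝ≥0∞) :
    μ {t | L * μ V ^ 2 < μ (V ∩ (· - t) ⁻¹' V)} ≤ L⁻¹ := by
  obtain hV0 | hV0 := eq_or_ne (μ V) 0
  · simp [measure_inter_null_of_null_left _ hV0]
  have hmeas : Measurable fun t ↦ μ (V ∩ (· - t) ⁻¹' V) :=
    measurable_measure_prodMk_left (measurableSet_mem_inter_preimage_sub hV hV)
  have markov : L * μ V ^ 2 * μ {t | L * μ V ^ 2 < μ (V ∩ (· - t) ⁻¹' V)} ≤ μ V ^ 2 :=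
    calc _ ≤ L * μ V ^ 2 * μ {t | L * μ V ^ 2 ≤ μ (V ∩ (· - t) ⁻¹' V)} :=
          mul_le_mul_right (measure_mono (Set.ofPred_subset_ofPred.2 fun _ ↦ le_of_lt)) _
      _ ≤ ∫⁻ t, μ (V ∩ (· - t) ⁻¹' V) ∂μ := mul_meas_ge_le_lintegral hmeas _
      _ = μ V ^ 2 := by rw [lintegral_measure_inter_preimage_sub μ hV hV, sq]
  rw [ENNReal.le_inv_iff_mul_le,
    ← ENNReal.mul_le_mul_iff_left (c := μ V ^ 2) (by simp [hV0]) (by finiteness)]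
  calc _ = _ := by ring
    _ ≤ _ := markov
    _ = _ := (one_mul _).symm

end RandomTranslate

lemma measure_pi_le_of_forall_measure_update_le {ι : Type*} [Fintype ι] [DecidableEq ι]
    {X : ι → Type*} [∀ i, MeasurableSpace (X i)] (μ : ∀ i, Measure (X i))
    [∀ i, IsProbabilityMeasure (μ i)] {E : Set (∀ i, X i)} (hE : MeasurableSet E) (a : ι) {c : ℝ≥0∞}
    (h : ∀ x, μ a {t | Function.update x a t ∈ E} ≤ c) : Measure.pi μ E ≤ c := by
  calc Measure.pi μ E = ∫⁻ x, E.indicator 1 x ∂Measure.pi μ := (lintegral_indicator_one hE).symm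
    _ ≤ ∫⁻ _, c ∂Measure.pi μ := by
      refine lintegral_le_of_lmarginal_le {a} (measurable_one.indicator hE) measurable_const ?_
      intro x
      rw [lmarginal_singleton, lmarginal_singleton]
      calc ∫⁻ t, E.indicator 1 (Function.update x a t) ∂μ a
          = μ a {t | Function.update x a t ∈ E} := lintegral_indicator_one (measurable_update x hE)
        _ ≤ c := h x
        _ = ∫⁻ _, c ∂μ a := by simp
    _ = c := by simp

section RandomTranslates

variable {ι G : Type*} [Fintype ι] [AddCommGroup G] [MeasurableSpace G] [MeasurableAdd₂ G]
  [MeasurableSub₂ G] [MeasurableNeg G] (μ : Measure G) [IsProbabilityMeasure μ]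
  [μ.IsAddLeftInvariant] [μ.IsNegInvariant]

lemma measure_pi_mul_sq_lt_measure_interTranslates_insert_le [DecidableEq ι] {U : Set G}
    (hU : MeasurableSet U) (L : ℝ≥0∞) {T : Finset ι} {a : ι} (ha : a ∉ T) :
    Measure.pi (fun _ : ι ↦ μ) {u | L * μ (interTranslates U u T) ^ 2 <
      μ (interTranslates U u (insert a T))} ≤ L⁻¹ := by
  have hE : MeasurableSet {u : ι → G | L * μ (interTranslates U u T) ^ 2 <
      μ (interTranslates U u (insert a T))} :=
    measurableSet_lt (((measurable_measure_interTranslates μ hU T).pow_const 2).const_mul L)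
      (measurable_measure_interTranslates μ hU (insert a T))
  refine measure_pi_le_of_forall_measure_update_le _ hE a fun u ↦ ?_
  have hupdate (t : G) : interTranslates U (Function.update u a t) T = interTranslates U u T :=
    interTranslates_congr U fun i hi ↦ Function.update_of_ne (ne_of_mem_of_not_mem hi ha) t u
  simp only [Set.mem_ofPred_eq, interTranslates_insert U _ ha, hupdate, Function.update_self]
  exact measure_mul_sq_lt_measure_inter_preimage_sub_le μ (measurableSet_interTranslates hU u T) L

lemma measure_pi_pow_mul_pow_lt_measure_interTranslates_le_of_measurableSet {U : Set G}
    (hU : MeasurableSet U) (L : ℝ≥0∞) (T : Finset ι) :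
    Measure.pi (fun _ : ι ↦ μ) {u | L ^ (2 ^ T.card - 1) * μ U ^ 2 ^ T.card <
      μ (interTranslates U u T)} ≤ T.card * L⁻¹ := by
  classical
  induction T using Finset.induction_on with
  | empty => simp
  | insert a T ha ih =>
    have exponent : 1 + (2 ^ T.card - 1) * 2 = 2 ^ (T.card + 1) - 1 := by
      have := Nat.one_le_two_pow (n := T.card)
      omega
    have bound_succ : L ^ (2 ^ (T.card + 1) - 1) * μ U ^ 2 ^ (T.card + 1) =
        L * (L ^ (2 ^ T.card - 1) * μ U ^ 2 ^ T.card) ^ 2 := by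
      rw [← exponent]
      ring
    have bad_subset : {u : ι → G | L ^ (2 ^ (T.card + 1) - 1) * μ U ^ 2 ^ (T.card + 1) <
        μ (interTranslates U u (insert a T))} ⊆
        {u | L ^ (2 ^ T.card - 1) * μ U ^ 2 ^ T.card < μ (interTranslates U u T)} ∪
        {u | L * μ (interTranslates U u T) ^ 2 < μ (interTranslates U u (insert a T))} := by
      refine fun u hu ↦ or_iff_not_imp_left.2 fun hT ↦ ?_
      rw [Set.mem_ofPred_eq, bound_succ] at hu
      refine lt_of_le_of_lt (?_ : L * μ (interTranslates U u T) ^ 2 ≤ _) hu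
      gcongr
      exact not_lt.1 hT
    rw [Finset.card_insert_of_notMem ha, Nat.cast_succ, add_mul, one_mul]
    exact (measure_mono bad_subset).trans <| (measure_union_le _ _).trans <|
      add_le_add ih (measure_pi_mul_sq_lt_measure_interTranslates_insert_le μ hU L ha)

theorem measure_pi_pow_mul_pow_lt_measure_interTranslates_le (U : Set G) (L : ℝ≥0∞)
    (T : Finset ι) :
    Measure.pi (fun _ : ι ↦ μ) {u | L ^ (2 ^ T.card - 1) * μ U ^ 2 ^ T.card <
      μ (interTranslates U u T)} ≤ T.card * L⁻¹ := by
  refine (measure_mono fun u hu ↦ ?_).trans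
    (measure_pi_pow_mul_pow_lt_measure_interTranslates_le_of_measurableSet μ
      (measurableSet_toMeasurable μ U) L T)
  rw [Set.mem_ofPred_eq, measure_toMeasurable]
  exact lt_of_lt_of_le hu (measure_mono (interTranslates_mono (subset_toMeasurable μ U) u T))

end RandomTranslates

section MatrixEndomorphism

open scoped Matrix.Module

variable {ι G : Type*} [Fintype ι] [DecidableEq ι] [AddCommGroup G]

lemma matrix_int_smul_surjective [DivisibleBy G ℤ] {M : Matrix ι ι ℤ} (hM : M.det ≠ 0) :
    Function.Surjective fun u : ι → G ↦ M • u := by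
  intro t
  refine ⟨M.adjugate • DivisibleBy.div t M.det, ?_⟩
  calc M • M.adjugate • DivisibleBy.div t M.det
      = (M.det • (1 : Matrix ι ι ℤ)) • DivisibleBy.div t M.det := by
        rw [← mul_smul, Matrix.mul_adjugate]
    _ = M.det • DivisibleBy.div t M.det := by rw [smul_assoc, one_smul]
    _ = t := DivisibleBy.div_cancel t hM

lemma measurePreserving_matrix_int_smul [TopologicalSpace G] [IsTopologicalAddGroup G]
    [CompactSpace G] [SecondCountableTopology G] [MeasurableSpace G] [BorelSpace G]
    [DivisibleBy G ℤ] (μ : Measure G) [μ.IsAddHaarMeasure] {M : Matrix ι ι ℤ} (hM : M.det ≠ 0) :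
    MeasurePreserving (fun u : ι → G ↦ M • u) (Measure.pi fun _ ↦ μ) (Measure.pi fun _ ↦ μ) := by
  have hcont : Continuous fun u : ι → G ↦ M • u := by
    refine continuous_pi fun i ↦ ?_
    simp only [Matrix.Module.smul_apply]
    fun_prop
  exact AddMonoidHom.measurePreserving (f := DistribSMul.toAddMonoidHom (ι → G) M) hcont
    (matrix_int_smul_surjective hM) rfl

end MatrixEndomorphism

lemma measure_preimage_of_leftInverse {α β : Type*} [MeasurableSpace α] [MeasurableSpace β]
    {μ : Measure α} {ν : Measure β} {f : α → β} {g : β → α} (hf : MeasurePreserving f μ ν)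
    (hg : Measurable g) (hgf : ∀ᵐ x ∂μ, g (f x) = x) (hfg : Function.LeftInverse f g) (s : Set β) :
    μ (f ⁻¹' s) = ν s := by
  have hgμ : ν.map g = μ := by
    have hid : g ∘ f =ᵐ[μ] id := hgf
    rw [← hf.map_eq, Measure.map_map hg hf.measurable, Measure.map_congr hid, Measure.map_id]
  refine le_antisymm (hf.map_eq ▸ Measure.le_map_apply hf.aemeasurable s) ?_
  calc ν s = ν (g ⁻¹' (f ⁻¹' s)) := by rw [← Set.preimage_comp, hfg.comp_eq_id, Set.preimage_id]
    _ ≤ ν.map g (f ⁻¹' s) := Measure.le_map_apply hg.aemeasurable _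
    _ = μ (f ⁻¹' s) := by rw [hgμ]

lemma one_sub_le_measure_compl_preimage {α β : Type*} [MeasurableSpace α] [MeasurableSpace β]
    {μ : Measure α} {ν : Measure β} [IsProbabilityMeasure ν] {f : α → β}
    (hf : MeasurePreserving f μ ν) (s : Set β) : 1 - ν s ≤ μ (f ⁻¹' s)ᶜ := by
  rw [tsub_le_iff_left]
  calc 1 = μ (f ⁻¹' s ∪ (f ⁻¹' s)ᶜ) := by
        rw [Set.union_compl_self, ← Set.preimage_univ (f := f),
          hf.measure_preimage MeasurableSet.univ.nullMeasurableSet, measure_univ]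
    _ ≤ μ (f ⁻¹' s) + μ (f ⁻¹' s)ᶜ := measure_union_le _ _
    _ ≤ ν s + μ (f ⁻¹' s)ᶜ := by
      gcongr
      exact hf.map_eq ▸ Measure.le_map_apply hf.aemeasurable s

section Torus

instance inst_s14 : IsProbabilityMeasure (volume : Measure UnitAddCircle) := ⟨UnitAddCircle.measure_univ⟩


lemma unitCube_eq_preimage (n : ℕ) :
    unitCube n = WithLp.ofLp ⁻¹' Set.univ.pi fun _ ↦ Set.Ico (0 : ℝ) 1 := by
  ext x
  simp [unitCube]

lemma measurableSet_unitCube (n : ℕ) : MeasurableSet (unitCube n) := by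
  rw [unitCube_eq_preimage]
  exact (MeasurableSet.univ_pi fun _ ↦ measurableSet_Ico).preimage
    (PiLp.volume_preserving_ofLp (Fin n)).measurable

/-- The projection `ℝⁿ → (ℝ/ℤ)ⁿ`, as an additive homomorphism. -/
def toTorus (n : ℕ) : EuclideanSpace ℝ (Fin n) →+ (Fin n → UnitAddCircle) where
  toFun x i := (x i : UnitAddCircle)
  map_zero' := rfl
  map_add' _ _ := rfl

lemma toTorus_eq_zero_iff {n : ℕ} {x : EuclideanSpace ℝ (Fin n)} :
    toTorus n x = 0 ↔ x ∈ intLat n := by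
  rw [funext_iff]
  refine forall_congr' fun i ↦ ?_
  change (x i : UnitAddCircle) = 0 ↔ _
  simp only [AddCircle.coe_eq_zero_iff, zsmul_one, eq_comm (a := x i)]

lemma mem_intLat_add_iff {n : ℕ} {A : Set (EuclideanSpace ℝ (Fin n))}
    {x : EuclideanSpace ℝ (Fin n)} : x ∈ intLat n + A ↔ toTorus n x ∈ toTorus n '' A := by
  simp_rw [Set.mem_add, Set.mem_image, ← toTorus_eq_zero_iff]
  constructor
  · rintro ⟨z, hz, a, ha, rfl⟩
    exact ⟨a, ha, by rw [map_add, hz, zero_add]⟩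
  · rintro ⟨a, ha, hax⟩
    exact ⟨x - a, by rw [map_sub, hax, sub_self], a, ha, sub_add_cancel x a⟩

lemma measurePreserving_toTorus (n : ℕ) :
    MeasurePreserving (toTorus n) (volume.restrict (unitCube n)) volume := by
  have hcircle : MeasurePreserving ((↑) : ℝ → UnitAddCircle)
      (volume.restrict (Set.Ico (0 : ℝ) 1)) volume := by
    simpa [Measure.restrict_congr_set Ico_ae_eq_Ioc] using UnitAddCircle.measurePreserving_mk 0
  have htorus := measurePreserving_pi (fun _ : Fin n ↦ volume.restrict (Set.Ico (0 : ℝ) 1))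
    (fun _ ↦ volume) fun _ ↦ hcircle
  rw [← Measure.restrict_pi_pi] at htorus
  rw [unitCube_eq_preimage]
  exact htorus.comp ((PiLp.volume_preserving_ofLp (Fin n)).restrict_preimage
    (MeasurableSet.univ_pi fun _ ↦ measurableSet_Ico))

/-- The section of `toTorus n` that takes values in the fundamental cube. -/
def torusSection (n : ℕ) (t : Fin n → UnitAddCircle) : EuclideanSpace ℝ (Fin n) :=
  WithLp.toLp 2 fun i ↦ AddCircle.equivIco 1 0 (t i)

lemma measurable_torusSection (n : ℕ) : Measurable (torusSection n) := by
  refine (MeasurableEquiv.toLp 2 (Fin n → ℝ)).measurable.comp (measurable_pi_lambda _ fun i ↦ ?_)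
  exact measurable_subtype_coe.comp
    ((AddCircle.measurableEquivIco 1 0).measurable.comp (measurable_pi_apply i))

lemma leftInverse_toTorus_torusSection (n : ℕ) :
    Function.LeftInverse (toTorus n) (torusSection n) :=
  fun _ ↦ funext fun _ ↦ AddCircle.coe_equivIco

lemma torusSection_toTorus {n : ℕ} {x : EuclideanSpace ℝ (Fin n)} (hx : x ∈ unitCube n) :
    torusSection n (toTorus n x) = x := by
  ext i
  exact AddCircle.equivIco_coe_of_mem (by simpa using hx i)

lemma rhoBar_eq_toReal_volume {n : ℕ} (A : Set (EuclideanSpace ℝ (Fin n))) :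
    rhoBar A = (volume (toTorus n '' A)ᶜ).toReal := by
  have hA : unitCube n \ (intLat n + A) = toTorus n ⁻¹' (toTorus n '' A)ᶜ ∩ unitCube n := by
    ext x
    simp only [Set.mem_sdiff, mem_intLat_add_iff, Set.mem_inter_iff, Set.mem_preimage,
      Set.mem_compl_iff, and_comm]
  rw [rhoBar, hA, ← Measure.restrict_apply' (measurableSet_unitCube n),
    measure_preimage_of_leftInverse (measurePreserving_toTorus n) (measurable_torusSection n)
      (ae_restrict_of_forall_mem (measurableSet_unitCube n) fun _ ↦ torusSection_toTorus)
      (leftInverse_toTorus_torusSection n)]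

lemma rhoBar_iUnion_add_sum {ι : Type*} [Fintype ι] {n : ℕ} (K : Set (EuclideanSpace ℝ (Fin n)))
    (z : ι → EuclideanSpace ℝ (Fin n)) :
    rhoBar (⋃ s : Finset ι, (K + {∑ i ∈ s, z i})) =
      (volume
        (interTranslates (toTorus n '' K)ᶜ (fun i ↦ toTorus n (z i)) Finset.univ)).toReal := by
  rw [rhoBar_eq_toReal_volume, compl_image_iUnion_add_sum]

end Torus

section RandomCover

variable {ι : Type*} [Fintype ι] [DecidableEq ι] {n : ℕ} {M : Matrix ι ι ℤ}

lemma measurePreserving_toTorus_sum_smul (hM : M.det ≠ 0) :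
    MeasurePreserving
      (fun (y : ι → EuclideanSpace ℝ (Fin n)) i ↦ toTorus n (∑ j, M i j • y j))
      (volume.restrict (Set.univ.pi fun _ ↦ unitCube n)) (Measure.pi fun _ ↦ volume) := by
  have hpi := measurePreserving_pi (fun _ : ι ↦ volume.restrict (unitCube n)) (fun _ ↦ volume)
    fun _ ↦ measurePreserving_toTorus n
  rw [← Measure.restrict_pi_pi] at hpi
  have hcomp : (fun (y : ι → EuclideanSpace ℝ (Fin n)) i ↦ toTorus n (∑ j, M i j • y j)) =
      (fun u i ↦ ∑ j, M i j • u j) ∘ fun y i ↦ toTorus n (y i) := by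
    ext y i
    simp only [map_sum, map_zsmul, Function.comp_apply]
  rw [hcomp]
  exact (measurePreserving_matrix_int_smul volume hM).comp hpi

theorem one_sub_le_volume_rhoBar_iUnion_add_sum_le (K : Set (EuclideanSpace ℝ (Fin n)))
    (hM : M.det ≠ 0) {C : ℝ} (hC : 0 < C) :
    ENNReal.ofReal (1 - 1 / C) ≤ volume {y : ι → EuclideanSpace ℝ (Fin n) |
      (∀ i, y i ∈ unitCube n) ∧
      rhoBar (⋃ s : Finset ι, (K + {∑ i ∈ s, ∑ j, M i j • y j})) ≤
        (C * Fintype.card ι) ^ (2 ^ Fintype.card ι - 1) * rhoBar K ^ 2 ^ Fintype.card ι} := by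
  set k := Fintype.card ι
  set U : Set (Fin n → UnitAddCircle) := (toTorus n '' K)ᶜ with hU
  set L : ℝ≥0∞ := ENNReal.ofReal C * k with hL
  let f (y : ι → EuclideanSpace ℝ (Fin n)) (i : ι) := toTorus n (∑ j, M i j • y j)
  let bad : Set (ι → Fin n → UnitAddCircle) :=
    {u | L ^ (2 ^ k - 1) * volume U ^ 2 ^ k < volume (interTranslates U u Finset.univ)}
  have : (volume : Measure (Fin n → UnitAddCircle)).IsNegInvariant := Pi.isNegInvariant_volume
  have bad_le : Measure.pi (fun _ : ι ↦ volume) bad ≤ ENNReal.ofReal (1 / C) := by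
    refine (measure_pi_pow_mul_pow_lt_measure_interTranslates_le volume U L Finset.univ).trans ?_
    rw [Finset.card_univ, one_div, ENNReal.ofReal_inv_of_pos hC, ENNReal.le_inv_iff_mul_le]
    calc k * L⁻¹ * ENNReal.ofReal C = L * L⁻¹ := by rw [hL]; ring
      _ ≤ 1 := ENNReal.mul_inv_le_one L
  have good_subset : (f ⁻¹' bad)ᶜ ∩ Set.univ.pi (fun _ ↦ unitCube n) ⊆
      {y | (∀ i, y i ∈ unitCube n) ∧
        rhoBar (⋃ s : Finset ι, (K + {∑ i ∈ s, ∑ j, M i j • y j})) ≤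
          (C * k) ^ (2 ^ k - 1) * rhoBar K ^ 2 ^ k} := by
    rintro y ⟨hy, hcube⟩
    refine ⟨fun i ↦ hcube i trivial, ?_⟩
    have hle : volume (interTranslates U (f y) Finset.univ) ≤
        L ^ (2 ^ k - 1) * volume U ^ 2 ^ k := not_lt.1 hy
    rw [rhoBar_iUnion_add_sum, rhoBar_eq_toReal_volume K, ← hU]
    refine (ENNReal.toReal_mono (by finiteness) hle).trans_eq ?_
    simp only [hL, ENNReal.toReal_mul, ENNReal.toReal_pow, ENNReal.toReal_ofReal hC.le,
      ENNReal.toReal_natCast]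
  calc ENNReal.ofReal (1 - 1 / C)
      = 1 - ENNReal.ofReal (1 / C) := by
        rw [ENNReal.ofReal_sub _ (by positivity), ENNReal.ofReal_one]
    _ ≤ 1 - Measure.pi (fun _ : ι ↦ volume) bad := tsub_le_tsub_left bad_le 1
    _ ≤ volume.restrict (Set.univ.pi fun _ ↦ unitCube n) (f ⁻¹' bad)ᶜ :=
      one_sub_le_measure_compl_preimage (measurePreserving_toTorus_sum_smul hM) bad
    _ ≤ _ := by
      rw [Measure.restrict_apply' (MeasurableSet.univ_pi fun _ ↦ measurableSet_unitCube n)]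
      exact measure_mono good_subset

end RandomCover

lemma det_ne_zero_of_linearIndependent_sum_smul {ι R V : Type*} [Fintype ι] [DecidableEq ι]
    [CommRing R] [IsDomain R] [AddCommGroup V] [Module R V] {M : Matrix ι ι R} {b v : ι → V}
    (hv : LinearIndependent R v) (hvb : ∀ i, v i = ∑ j, M i j • b j) : M.det ≠ 0 := by
  intro hdet
  obtain ⟨c, hc, hcM⟩ := Matrix.exists_vecMul_eq_zero_iff.2 hdet
  refine hc (funext (Fintype.linearIndependent_iff.1 hv c ?_))
  calc ∑ i, c i • v i = ∑ j, (c ᵥ* M) j • b j := by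
        simp_rw [hvb, Finset.smul_sum, smul_smul, Matrix.vecMul, dotProduct, Finset.sum_smul]
        exact Finset.sum_comm
    _ = 0 := by simp [hcM]

section Lattice

variable {d : ℕ}

lemma mem_vertexSet_zero_iff {v : Fin d → EuclideanSpace ℝ (Fin d)}
    {w : EuclideanSpace ℝ (Fin d)} :
    w ∈ vertexSet 0 v ↔ ∃ s : Finset (Fin d), ∑ i ∈ s, v i = w := by
  constructor
  · classical
    rintro ⟨lam, hlam, rfl⟩
    refine ⟨Finset.univ.filter fun i ↦ lam i = 1, ?_⟩
    rw [zero_add, Finset.sum_filter]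
    refine Finset.sum_congr rfl fun i _ ↦ ?_
    rcases hlam i with h | h <;> simp [h]
  · rintro ⟨s, rfl⟩
    exact ⟨fun i ↦ if i ∈ s then 1 else 0, fun i ↦ (ite_eq_or_eq ..).symm, by simp⟩

lemma mem_latticeSet_iff {b : Fin d → EuclideanSpace ℝ (Fin d)} {x : EuclideanSpace ℝ (Fin d)} :
    x ∈ latticeSet b ↔ ∃ c : Fin d → ℤ, x = ∑ j, c j • b j := by
  simp only [latticeSet, Set.mem_ofPred_eq, Int.cast_smul_eq_zsmul]

/-- The linear map `φ_y = [y₁, …, y_d] B⁻¹`, where `B` has columns `b₁, …, b_d`. -/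
def latticeMap {n : ℕ} (b : Fin d → EuclideanSpace ℝ (Fin d))
    (y : Fin d → EuclideanSpace ℝ (Fin n)) :
    EuclideanSpace ℝ (Fin d) →ₗ[ℝ] EuclideanSpace ℝ (Fin n) :=
  Fintype.linearCombination ℝ y ∘ₗ (Matrix.of fun i j ↦ b j i)⁻¹.mulVecLin ∘ₗ
    (WithLp.linearEquiv 2 ℝ (Fin d → ℝ)).toLinearMap

lemma latticeMap_apply {n : ℕ} (b : Fin d → EuclideanSpace ℝ (Fin d))
    (y : Fin d → EuclideanSpace ℝ (Fin n)) (w : EuclideanSpace ℝ (Fin d)) :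
    latticeMap b y w = ∑ j, ((Matrix.of fun i j' ↦ b j' i)⁻¹ *ᵥ fun i ↦ w i) j • y j :=
  rfl

lemma latticeMap_basis {n : ℕ} {b : Fin d → EuclideanSpace ℝ (Fin d)} (hb : LinearIndependent ℝ b)
    (y : Fin d → EuclideanSpace ℝ (Fin n)) (k : Fin d) : latticeMap b y (b k) = y k := by
  set B : Matrix (Fin d) (Fin d) ℝ := Matrix.of fun i j ↦ b j i with hB
  have hcols : LinearIndependent ℝ B.col :=
    hb.map' (WithLp.linearEquiv 2 ℝ (Fin d → ℝ)).toLinearMap (LinearEquiv.ker _)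
  have hdet : IsUnit B.det :=
    (Matrix.isUnit_iff_isUnit_det B).1 (Matrix.linearIndependent_cols_iff_isUnit.1 hcols)
  have hcoord : (B⁻¹ *ᵥ fun i ↦ b k i) = Pi.single k 1 := by
    have hbk : (fun i ↦ b k i) = B *ᵥ Pi.single k 1 := (Matrix.mulVec_single_one B k).symm
    rw [hbk, Matrix.mulVec_mulVec, Matrix.nonsing_inv_mul B hdet, Matrix.one_mulVec]
  rw [latticeMap_apply, ← hB, hcoord]
  simp [Pi.single_apply]

end Lattice

theorem random_translates_good_probability_parallelepiped_general {n d : ℕ}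
    (K : Set (EuclideanSpace ℝ (Fin n))) {C : ℝ} (hC : 0 < C)
    {b : Fin d → EuclideanSpace ℝ (Fin d)} (hb : LinearIndependent ℝ b)
    {v : Fin d → EuclideanSpace ℝ (Fin d)} (hv : LinearIndependent ℝ v)
    (hvert : vertexSet 0 v ⊆ latticeSet b) :
    ENNReal.ofReal (1 - 1 / C) ≤
      volume {y : Fin d → EuclideanSpace ℝ (Fin n) |
        (∀ i, y i ∈ unitCube n) ∧
        rhoBar (⋃ w ∈ vertexSet 0 v,
            (K + {∑ j, ((Matrix.of fun i j' => b j' i)⁻¹ *ᵥ (fun i => w i)) j • y j})) ≤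
          (C * d) ^ (2 ^ d - 1) * rhoBar K ^ 2 ^ d} := by
  have hvb (i : Fin d) : ∃ c : Fin d → ℤ, v i = ∑ j, c j • b j :=
    mem_latticeSet_iff.1 <| hvert (mem_vertexSet_zero_iff.2 ⟨{i}, Finset.sum_singleton v i⟩)
  choose M hM using hvb
  have hdet : (Matrix.of M).det ≠ 0 :=
    det_ne_zero_of_linearIndependent_sum_smul (hv.restrict_scalars' ℤ) hM
  have hcover (y : Fin d → EuclideanSpace ℝ (Fin n)) :
      ⋃ w ∈ vertexSet 0 v, (K + {latticeMap b y w}) =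
        ⋃ s : Finset (Fin d), (K + {∑ i ∈ s, ∑ j, M i j • y j}) := by
    simp [mem_vertexSet_zero_iff, Set.iUnion_exists, hM, latticeMap_basis hb]
  simp_rw [← latticeMap_apply, hcover]
  simpa using one_sub_le_volume_rhoBar_iUnion_add_sum_le K hdet hC

/-- **Claim 3.6.** Let `K ⊆ ℝⁿ` be a convex body with `δ = ρ̄(ℤⁿ + K)`, let
`C = (4^d d^{d/2} + 1)^{d·2^d} + 1`, let `Λ_d ⊆ ℝ^d` be a lattice of determinant `1`
generated by `b₁, …, b_d` with matrix `B = [b₁,…,b_d]`, and let `P` be a fundamental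
parallelepiped of `Λ_d` with the origin as a vertex.  For `y = (y₁,…,y_d) ∈ ([0,1)ⁿ)^d`
let `φ_y(z) = [y₁,…,y_d] B⁻¹ z` and `K_y^P = ⋃_{w ∈ V(P)} (K + φ_y(w))`.  Then with
probability at least `1 − 1/C` over uniform `y`, one has
`ρ̄(ℤⁿ + K_y^P) ≤ (Cd)^{2^d−1} δ^{2^d}`. -/
theorem random_translates_good_probability_parallelepiped (n d : ℕ) (hn : 1 ≤ n) (hd : 1 ≤ d)
    (K : Set (EuclideanSpace ℝ (Fin n)))
    (hKcpt : IsCompact K) (hKconv : Convex ℝ K) (hKint : (interior K).Nonempty)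
    (δ C : ℝ) (hδ : δ = rhoBar K)
    (hC : C = (4 ^ d * (d : ℝ) ^ ((d : ℝ) / 2) + 1) ^ (d * 2 ^ d) + 1)
    (b : Fin d → EuclideanSpace ℝ (Fin d)) (hb : LinearIndependent ℝ b)
    (hdet : latticeDet b = 1)
    (v : Fin d → EuclideanSpace ℝ (Fin d)) (hv : LinearIndependent ℝ v)
    (hvert : vertexSet 0 v ⊆ latticeSet b)
    (hvolP : volume (convexHull ℝ (vertexSet 0 v)) = ENNReal.ofReal (latticeDet b)) :
    ENNReal.ofReal (1 - 1 / C) ≤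
      volume {y : Fin d → EuclideanSpace ℝ (Fin n) |
        (∀ i, y i ∈ unitCube n) ∧
        rhoBar (⋃ w ∈ vertexSet 0 v,
            (K + {∑ j, ((Matrix.of fun i j' => b j' i)⁻¹ *ᵥ (fun i => w i)) j • y j})) ≤
          (C * d) ^ (2 ^ d - 1) * δ ^ 2 ^ d} := by
  subst hδ
  exact random_translates_good_probability_parallelepiped_general K (hC ▸ by positivity) hb hv hvert

end
end
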